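/- In a flag 3-polytope, any k-gonal facet (k ≥ 3) is surrounded by a k-belt, i.e. the k facets adjacent to it, taken in cyclic order around its boundary, form a k-belt. -/

import Mathlib

open Set

noncomputable section

/-- The ambient space `ℝ³`. -/
abbrev E3 := EuclideanSpace ℝ (Fin 3)

/-- The cyclic successor in `Fin k`. -/
def nxt {k : ℕ} (i : Fin k) : Fin k := ⟨(i.1 + 1) % k, Nat.mod_lt _ i.pos⟩

/-- The cyclic predecessor in `Fin k`. -/
def prv {k : ℕ} (i : Fin k) : Fin k := ⟨(i.1 + (k - 1)) % k, Nat.mod_lt _ i.pos⟩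

/-- A convex polytope in `ℝ³`: the convex hull of a finite set of points. -/
def IsPolytope (P : Set E3) : Prop := ∃ V : Finset E3, P = convexHull ℝ (V : Set E3)

/-- The dimension of a subset of `ℝ³` (the dimension of its affine hull). -/
def setDim (A : Set E3) : ℕ := Module.finrank ℝ ↥(vectorSpan ℝ A)

/-- A face of a polytope: a nonempty closed convex extreme subset. -/
def IsFaceOf (F P : Set E3) : Prop :=
  F.Nonempty ∧ IsClosed F ∧ Convex ℝ F ∧ IsExtreme ℝ P F

/-- A facet: a `2`-dimensional face. -/
def IsFacetOf (F P : Set E3) : Prop := IsFaceOf F P ∧ setDim F = 2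

/-- An edge: a `1`-dimensional face. -/
def IsEdgeOf (F P : Set E3) : Prop := IsFaceOf F P ∧ setDim F = 1

/-- A vertex: a point whose singleton is a face. -/
def IsVertexOf (v : E3) (P : Set E3) : Prop := IsFaceOf {v} P

/-- The set of facets of `P`. -/
def facets (P : Set E3) : Set (Set E3) := {F | IsFacetOf F P}

/-- A simple 3-polytope: a 3-dimensional convex polytope each of whose vertices
is contained in exactly 3 facets. -/
def IsSimplePolytope3 (P : Set E3) : Prop :=
  IsPolytope P ∧ setDim P = 3 ∧
    ∀ v : E3, IsVertexOf v P → {F | IsFacetOf F P ∧ v ∈ F}.ncard = 3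

/-- The number of edges of a facet `F` of `P`. -/
def facetEdges (P F : Set E3) : ℕ := {e | IsEdgeOf e P ∧ e ⊆ F}.ncard

/-- `pVec P k` is the number of `k`-gonal facets of `P`. -/
def pVec (P : Set E3) (k : ℕ) : ℕ := {F | IsFacetOf F P ∧ facetEdges P F = k}.ncard

/-- A (mathematical) fullerene: a simple 3-polytope with all facets pentagons
and hexagons. -/
def IsFullerene (P : Set E3) : Prop :=
  IsSimplePolytope3 P ∧ ∀ F, IsFacetOf F P → facetEdges P F = 5 ∨ facetEdges P F = 6

/-- A `k`-loop in `P` (`k ≥ 2`): a cyclic sequence of facets in which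
(cyclically) consecutive facets intersect in an edge; a `1`-loop is a single facet. -/
def IsLoop (P : Set E3) {k : ℕ} (L : Fin k → Set E3) : Prop :=
  0 < k ∧ (∀ i, IsFacetOf (L i) P) ∧ (2 ≤ k → ∀ i, IsEdgeOf (L i ∩ L (nxt i)) P)

/-- A simple loop: a loop with pairwise different facets. -/
def IsSimpleLoop (P : Set E3) {k : ℕ} (L : Fin k → Set E3) : Prop :=
  IsLoop P L ∧ Function.Injective L

/-- A `k`-belt (`k ≥ 3`): a `k`-loop such that for `k = 3` the three facets have empty
total intersection, and for `k ≥ 4` two facets intersect iff they are cyclically successive. -/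
def IsBelt (P : Set E3) {k : ℕ} (L : Fin k → Set E3) : Prop :=
  3 ≤ k ∧ IsLoop P L ∧
    (k = 3 → ∀ i, L i ∩ L (nxt i) ∩ L (nxt (nxt i)) = ∅) ∧
    (4 ≤ k → ∀ p q, p ≠ q → ((L p ∩ L q).Nonempty ↔ q = nxt p ∨ p = nxt q))

/-- A flag 3-polytope: a simple 3-polytope different from the tetrahedron
(i.e. not having exactly 4 facets) without 3-belts. -/
def IsFlag3Polytope (P : Set E3) : Prop :=
  IsSimplePolytope3 P ∧ (facets P).ncard ≠ 4 ∧ ∀ B : Fin 3 → Set E3, ¬ IsBelt P B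

/-- `γ` is the simple edge-cycle of `P` traced by the cyclically ordered distinct
vertices `v 0, …, v (n-1)` (`n ≥ 3`), consecutive ones joined by edges of `P`. -/
def IsSimpleEdgeCycleVia (P γ : Set E3) {n : ℕ} (v : Fin n → E3) : Prop :=
  3 ≤ n ∧ Function.Injective v ∧ (∀ i, IsVertexOf (v i) P) ∧
    (∀ i, IsEdgeOf (segment ℝ (v i) (v (nxt i))) P) ∧
    γ = ⋃ i, segment ℝ (v i) (v (nxt i))

/-- A simple edge-cycle in the graph of `P`. -/
def IsSimpleEdgeCycle (P γ : Set E3) : Prop :=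
  ∃ (n : ℕ) (v : Fin n → E3), IsSimpleEdgeCycleVia P γ v

/-- `C` is a connected component of the set `A`. -/
def IsCompOf (C A : Set E3) : Prop := ∃ x ∈ A, C = connectedComponentIn A x

/-- The loop `L` is obtained by walking round the simple edge-cycle `γ` inside the
connected component `C` of `∂P ∖ γ`: the facets of `L` lie on the side `C`, and the
edges of `γ`, in cyclic order, lie in the facets of `L` in cyclic order (the loop
index advancing exactly when the facet changes, and making exactly one turn). -/
def WalksRound (P γ C : Set E3) {k : ℕ} (L : Fin k → Set E3) : Prop :=
  IsLoop P L ∧ (∀ i, intrinsicInterior ℝ (L i) ⊆ C) ∧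
    ∃ (n : ℕ) (v : Fin n → E3) (φ : Fin n → Fin k),
      IsSimpleEdgeCycleVia P γ v ∧
      (∀ i, segment ℝ (v i) (v (nxt i)) ⊆ L (φ i)) ∧
      (∀ i, φ (nxt i) = φ i ∨ φ (nxt i) = nxt (φ i)) ∧
      Function.Surjective φ ∧
      (2 ≤ k → (Finset.univ.filter (fun i : Fin n => φ (nxt i) ≠ φ i)).card = k)

/-- Two loops border each other: they are obtained by walking round the same simple
edge-cycle `γ` in the two different connected components of `∂P ∖ γ`. -/
def Borders (P : Set E3) {k₁ k₂ : ℕ} (L₁ : Fin k₁ → Set E3) (L₂ : Fin k₂ → Set E3) : Prop :=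
  ∃ γ C₁ C₂ : Set E3, IsCompOf C₁ (frontier P \ γ) ∧ IsCompOf C₂ (frontier P \ γ) ∧
    C₁ ≠ C₂ ∧ WalksRound P γ C₁ L₁ ∧ WalksRound P γ C₂ L₂

/-- A loop surrounds the facet `F` if it borders the `1`-loop `(F)`. -/
def Surrounds (P : Set E3) {k : ℕ} (L : Fin k → Set E3) (F : Set E3) : Prop :=
  IsFacetOf F P ∧ Borders P L (fun _ : Fin 1 => F)

/-- The number of edges of `P` lying in the facet `F` and in the set `γ`. -/
def edgesInCommon (P F γ : Set E3) : ℕ := {e | IsEdgeOf e P ∧ e ⊆ F ∧ e ⊆ γ}.ncard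
/-- A simple 3-polytope all of whose facets are pentagons and hexagons except for
at most one exceptional facet, which is a quadrangle or a heptagon. -/
def IsAlmostFullerene (P : Set E3) : Prop :=
  IsSimplePolytope3 P ∧
    (∀ F, IsFacetOf F P → facetEdges P F ∈ ({4, 5, 6, 7} : Set ℕ)) ∧
    {F | IsFacetOf F P ∧ (facetEdges P F = 4 ∨ facetEdges P F = 7)}.ncard ≤ 1

/-- The (combinatorial) dodecahedron: a simple 3-polytope with all facets pentagons. -/
def IsDodecahedron (P : Set E3) : Prop :=
  IsSimplePolytope3 P ∧ ∀ F, IsFacetOf F P → facetEdges P F = 5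

/-- `e` and `e'` are opposite edges of the hexagonal facet `H`: they are disjoint and no
edge of `H` meets both of them. -/
def OppositeEdges (P H e e' : Set E3) : Prop :=
  IsEdgeOf e P ∧ IsEdgeOf e' P ∧ e ⊆ H ∧ e' ⊆ H ∧ e ∩ e' = ∅ ∧
    ∀ e'', IsEdgeOf e'' P → e'' ⊆ H → (e'' ∩ e).Nonempty → e'' ≠ e → e'' ∩ e' = ∅

/-- A cap: a pentagonal facet `F₀` together with a surrounding 5-belt of pentagons. -/
def IsCapOf (P F₀ : Set E3) (L : Fin 5 → Set E3) : Prop :=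
  IsFacetOf F₀ P ∧ facetEdges P F₀ = 5 ∧ (∀ i, facetEdges P (L i) = 5) ∧
    IsBelt P L ∧ Surrounds P L F₀

/-- The number of 5-belts of `P` (counted as sets of facets). -/
def fiveBeltCount (P : Set E3) : ℕ :=
  {S : Set (Set E3) | ∃ B : Fin 5 → Set E3, IsBelt P B ∧ S = Set.range B}.ncard

/-- The structure of the `k`-th fullerene of Family I: two caps separated by `k`
hexagonal 5-belts, each bordering the next (for `k = 0` the caps border each other,
giving the dodecahedron). -/
def FamilyI (P : Set E3) (k : ℕ) : Prop :=
  ∃ (F₀ F₀' : Set E3) (L L' : Fin 5 → Set E3) (B : ℕ → Fin 5 → Set E3),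
    IsCapOf P F₀ L ∧ IsCapOf P F₀' L' ∧
    (∀ i < k, IsBelt P (B i) ∧ ∀ j, facetEdges P (B i j) = 6) ∧
    (∀ i, i + 1 < k → Borders P (B i) (B (i + 1))) ∧
    (0 < k → Borders P L (B 0) ∧ Borders P (B (k - 1)) L') ∧
    (k = 0 → Borders P L L') ∧
    facets P = {F₀, F₀'} ∪ Set.range L ∪ Set.range L' ∪ ⋃ i ∈ Set.Iio k, Set.range (B i)

/-- `P` is obtained from `Q` by an `(s,k;t₀,t₁)`-truncation with new edge `Enew`:
`P` is cut off from `Q` by a halfspace `{f ≤ c}` whose boundary plane crosses exactly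
two edges `E₀ ≠ E₁` of a `k`-gonal facet `F` of `Q`, cutting off exactly `s` vertices,
all belonging to `F`; `G₀` and `G₁` are the facets meeting `F` along `E₀` and `E₁`, and
they are `t₀`- and `t₁`-gons; `Enew` is the new edge dividing `F`. -/
def IsTruncation (s k t₀ t₁ : ℕ) (Q P Enew : Set E3) : Prop :=
  IsSimplePolytope3 Q ∧ IsSimplePolytope3 P ∧
    ∃ (F E₀ E₁ G₀ G₁ : Set E3) (f : E3 →ₗ[ℝ] ℝ) (c : ℝ),
      IsFacetOf F Q ∧ facetEdges Q F = k ∧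
      IsEdgeOf E₀ Q ∧ IsEdgeOf E₁ Q ∧ E₀ ≠ E₁ ∧ E₀ ⊆ F ∧ E₁ ⊆ F ∧
      IsFacetOf G₀ Q ∧ IsFacetOf G₁ Q ∧ G₀ ≠ F ∧ G₁ ≠ F ∧ E₀ ⊆ G₀ ∧ E₁ ⊆ G₁ ∧
      facetEdges Q G₀ = t₀ ∧ facetEdges Q G₁ = t₁ ∧
      P = Q ∩ {x | f x ≤ c} ∧
      (∀ e, IsEdgeOf e Q → (∃ x ∈ e, c < f x) → (∃ x ∈ e, f x < c) → e = E₀ ∨ e = E₁) ∧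
      (∃ x ∈ E₀, c < f x) ∧ (∃ x ∈ E₀, f x < c) ∧
      (∃ x ∈ E₁, c < f x) ∧ (∃ x ∈ E₁, f x < c) ∧
      (∀ v, IsVertexOf v Q → f v ≠ c) ∧
      {v | IsVertexOf v Q ∧ c < f v}.ncard = s ∧
      (∀ v, IsVertexOf v Q → c < f v → v ∈ F) ∧
      Enew = F ∩ {x | f x = c}

/-- Combinatorial equivalence of polytopes: an inclusion-preserving bijection
between the sets of faces. -/
def CombEquiv (P Q : Set E3) : Prop :=
  ∃ φ : {A : Set E3 // IsFaceOf A P} ≃ {A : Set E3 // IsFaceOf A Q},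
    ∀ A B : {A : Set E3 // IsFaceOf A P}, A.1 ⊆ B.1 ↔ (φ A).1 ⊆ (φ B).1

/-- Combinatorial equivalence sending the face `Ep` of `P` to the face `Eq` of `Q`. -/
def CombEquivMapping (P Q Ep Eq : Set E3) : Prop :=
  ∃ φ : {A : Set E3 // IsFaceOf A P} ≃ {A : Set E3 // IsFaceOf A Q},
    (∀ A B : {A : Set E3 // IsFaceOf A P}, A.1 ⊆ B.1 ↔ (φ A).1 ⊆ (φ B).1) ∧
    ∀ h : IsFaceOf Ep P, ((φ ⟨Ep, h⟩) : {A : Set E3 // IsFaceOf A Q}).1 = Eq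

/-- The straightening of `P` along the edge `E` is defined: `P` is combinatorially
obtained from some simple 3-polytope `Q` by an `(s,k)`-truncation whose new edge
corresponds to `E`. -/
def StraighteningDefined (P E : Set E3) : Prop :=
  ∃ (s k t₀ t₁ : ℕ) (Q P₁ E₁ : Set E3),
    IsTruncation s k t₀ t₁ Q P₁ E₁ ∧ CombEquivMapping P P₁ E E₁

/-- `P` is obtained from `Q` by one of the truncations
`(1;4,5)`, `(1;5,5)`, `(2,6;4,5)`, `(2,6;5,5)`, `(2,6;5,6)`, `(2,7;5,5)`, `(2,7;5,6)`. -/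
def FullereneStep (Q P : Set E3) : Prop :=
  ∃ (s k t₀ t₁ : ℕ) (Enew : Set E3), IsTruncation s k t₀ t₁ Q P Enew ∧
    ((s = 1 ∧ (({t₀, t₁} : Finset ℕ) = {4, 5} ∨ ({t₀, t₁} : Finset ℕ) = {5, 5})) ∨
     (s = 2 ∧ k = 6 ∧ (({t₀, t₁} : Finset ℕ) = {4, 5} ∨ ({t₀, t₁} : Finset ℕ) = {5, 5} ∨
        ({t₀, t₁} : Finset ℕ) = {5, 6})) ∨
     (s = 2 ∧ k = 7 ∧ (({t₀, t₁} : Finset ℕ) = {5, 5} ∨ ({t₀, t₁} : Finset ℕ) = {5, 6})))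

/-!
Every edge of the facet `F` lies in exactly one other facet, so the boundary cycle of `F` yields
a cyclic sequence of neighbouring facets `L i`. By simplicity a facet meeting `F` contains a vertex
of `F` and hence is one of the `L i`, and two facets with a common point share an edge. If two
non-consecutive `L p`, `L q` met, then `F, L p, L q` would be a `3`-belt; if `F` is a triangle and
its three neighbours had a common vertex, `P` would be a tetrahedron. Hence the `L i` form a belt.

For the topological part, let `γ` be the boundary cycle of `F`. The set `F \ γ` is convex, and so is
each `L i \ F`; consecutive ones overlap in the edge `L i ∩ L (i + 1)`, so together they lie in one
component of `∂P \ γ`. The two components differ because, off `γ`, the facet `F` and the union of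
all other facets are disjoint closed sets.
-/

section CyclicSuccessor

variable {k : ℕ}

lemma nxt_val (i : Fin k) : (nxt i : ℕ) = if (i : ℕ) + 1 = k then 0 else (i : ℕ) + 1 := by
  split_ifs with h
  · simp [nxt, h]
  · exact Nat.mod_eq_of_lt (by omega)

lemma nxt_injective : Function.Injective (nxt : Fin k → Fin k) := by
  intro i j h
  have hval := congrArg Fin.val h
  rw [nxt_val, nxt_val] at hval
  split_ifs at hval <;> omega

lemma nxt_surjective : Function.Surjective (nxt : Fin k → Fin k) :=
  Finite.injective_iff_surjective.1 nxt_injective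

lemma nxt_ne_self (hk : 2 ≤ k) (i : Fin k) : nxt i ≠ i := by
  rw [Ne, Fin.ext_iff, nxt_val]
  split_ifs <;> omega

lemma nxt_nxt_ne_self (hk : 3 ≤ k) (i : Fin k) : nxt (nxt i) ≠ i := by
  rw [Ne, Fin.ext_iff, nxt_val, nxt_val]
  split_ifs <;> omega

lemma nxt_induction {p : Fin k → Prop} (i₀ : Fin k) (zero : p i₀)
    (succ : ∀ i, p i → p (nxt i)) (i : Fin k) : p i := by
  have shift (n : ℕ) : p ⟨(i₀ + n) % k, Nat.mod_lt _ i₀.pos⟩ := by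
    induction n with
    | zero => simpa [Nat.mod_eq_of_lt i₀.2] using zero
    | succ n ih => simpa [nxt, ← add_assoc] using succ _ ih
  convert shift (i + (k - i₀)) using 1
  have hi₀ : (i₀ : ℕ) + (i + (k - i₀)) = i + k := by omega
  simp [hi₀, Nat.mod_eq_of_lt i.2]

lemma exists_equiv_fin_nxt {α : Type*} [Fintype α] [Nonempty α] {σ : Equiv.Perm α}
    (hσ : σ.IsCycleOn univ) :
    ∃ e : Fin (Fintype.card α) ≃ α, ∀ i, e (nxt i) = σ (e i) := by
  obtain ⟨a⟩ := ‹Nonempty α›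
  rw [← Finset.coe_univ] at hσ
  have pow_eq_pow_iff {m n : ℕ} : (σ ^ m) a = (σ ^ n) a ↔ m ≡ n [MOD Fintype.card α] :=
    hσ.pow_apply_eq_pow_apply (Finset.mem_univ a)
  have inj : Function.Injective fun i : Fin (Fintype.card α) ↦ (σ ^ (i : ℕ)) a := fun i j h ↦
    Fin.ext <| Nat.ModEq.eq_of_lt_of_lt (pow_eq_pow_iff.1 h) i.2 j.2
  refine ⟨.ofBijective _ ((Fintype.bijective_iff_injective_and_card _).2 ⟨inj, by simp⟩),
    fun i ↦ ?_⟩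
  rw [Equiv.ofBijective_apply, Equiv.ofBijective_apply, ← Equiv.Perm.mul_apply, ← pow_succ']
  exact pow_eq_pow_iff.2 (Nat.mod_modEq _ _)

end CyclicSuccessor

lemma exists_tilt {ι : Type*} {s : Set ι} (hfin : s.Finite) (hne : s.Nonempty) (u g : ι → ℝ)
    (hg : ∀ i ∈ s, 0 < g i) :
    ∃ t, (∀ i ∈ s, 0 ≤ u i + t * g i) ∧ ∃ w ∈ s, u w + t * g w = 0 := by
  obtain ⟨w, hw, hmin⟩ := exists_min_image s (fun i ↦ u i / g i) hfin hne
  refine ⟨-(u w / g w), fun i hi ↦ ?_, w, hw, ?_⟩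
  · have := (le_div_iff₀ (hg i hi)).1 (hmin i hi)
    linarith
  · rw [neg_mul, div_mul_cancel₀ _ (hg w hw).ne', add_neg_cancel]

section Supporting

variable {E : Type*} [AddCommGroup E] [Module ℝ E] {Q G : Set E}

lemma vectorSpan_convexHull (s : Set E) :
    vectorSpan ℝ (convexHull ℝ s) = vectorSpan ℝ s := by
  rw [← direction_affineSpan, affineSpan_convexHull, direction_affineSpan]

/-- The hyperplane `f = c` supports `Q` along `G`: one has `c ≤ f` on `Q`, with equality exactly
on `G`. -/
structure IsSupporting (f : E →ₗ[ℝ] ℝ) (c : ℝ) (Q G : Set E) : Prop where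
  le : ∀ x ∈ Q, c ≤ f x
  eq_iff : ∀ x ∈ Q, f x = c ↔ x ∈ G

namespace IsSupporting

variable {f : E →ₗ[ℝ] ℝ} {c : ℝ}

lemma lt (h : IsSupporting f c Q G) {x : E} (hx : x ∈ Q) (hxG : x ∉ G) : c < f x :=
  (h.le x hx).lt_of_ne' fun hfx ↦ hxG ((h.eq_iff x hx).1 hfx)

end IsSupporting

lemma isSupporting_sep {f : E →ₗ[ℝ] ℝ} {c : ℝ} (h : ∀ x ∈ Q, c ≤ f x) :
    IsSupporting f c Q {x ∈ Q | f x = c} :=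
  ⟨h, fun _ hx ↦ ⟨fun hfx ↦ ⟨hx, hfx⟩, And.right⟩⟩

lemma isSupporting_or_neg (hQ : Convex ℝ Q) (hG : IsExtreme ℝ Q G) {f : E →ₗ[ℝ] ℝ} {c : ℝ}
    (hf : ∀ x ∈ Q, f x = c ↔ x ∈ G) : IsSupporting f c Q G ∨ IsSupporting (-f) (-c) Q G := by
  suffices (∀ x ∈ Q, c ≤ f x) ∨ ∀ x ∈ Q, f x ≤ c from
    this.imp (⟨·, hf⟩) fun h ↦ ⟨by simpa using h, by simpa using hf⟩
  by_contra! hcon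
  obtain ⟨⟨x, hx, hxc⟩, y, hy, hyc⟩ := hcon
  obtain ⟨m, hm, hmc⟩ : c ∈ f.toAffineMap '' openSegment ℝ x y := by
    rw [image_openSegment, LinearMap.coe_toAffineMap, openSegment_eq_Ioo (hxc.trans hyc)]
    exact ⟨hxc, hyc⟩
  have hmQ : m ∈ Q := hQ.openSegment_subset hx hy hm
  have hxG : x ∈ G := hG.2 hx hy ((hf m hmQ).1 hmc) hm
  exact hxc.ne ((hf x hx).2 hxG)

lemma mem_convexHull_range_of_simplex {ι : Type*} [Fintype ι] [FiniteDimensional ℝ E]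
    (hcard : Fintype.card ι = Module.finrank ℝ E + 1) {p : ι → E} {f : ι → E →ₗ[ℝ] ℝ}
    {c : ι → ℝ} (hon : ∀ i j, i ≠ j → f i (p j) = c i) (hoff : ∀ i, c i < f i (p i)) {x : E}
    (hx : ∀ i, c i ≤ f i x) : x ∈ convexHull ℝ (range p) := by
  have height_eq {w : ι → ℝ} (hw : ∑ i, w i = 1) (i : ι) :
      f i (∑ j, w j • p j) - c i = w i * (f i (p i) - c i) := by
    have hci : c i = ∑ j, w j * c i := by rw [← Finset.sum_mul, hw, one_mul]
    rw [map_sum, hci, ← Finset.sum_sub_distrib, ← hci, Finset.sum_eq_single i]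
    · simp [mul_sub]
    · intro j _ hji
      simp [hon i j hji.symm]
    · simp
  have hind : AffineIndependent ℝ p := by
    rw [affineIndependent_iff_eq_of_fintype_affineCombination_eq]
    intro w₁ w₂ hw₁ hw₂ h
    rw [Finset.affineCombination_eq_linear_combination _ _ _ hw₁,
      Finset.affineCombination_eq_linear_combination _ _ _ hw₂] at h
    funext i
    refine mul_right_cancel₀ (sub_pos.2 (hoff i)).ne' ?_
    rw [← height_eq hw₁, ← height_eq hw₂, h]
  have hspan := hind.affineSpan_eq_top_iff_card_eq_finrank_add_one.2 hcard
  obtain ⟨w, hw, hxw⟩ := eq_affineCombination_of_mem_affineSpan_of_fintype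
    (hspan ▸ AffineSubspace.mem_top ℝ E x : x ∈ affineSpan ℝ (range p))
  rw [Finset.affineCombination_eq_linear_combination _ _ _ hw] at hxw
  have hw₀ (i : ι) : 0 ≤ w i := by
    refine nonneg_of_mul_nonneg_left ?_ (sub_pos.2 (hoff i))
    rw [← height_eq hw, ← hxw]
    exact sub_nonneg.2 (hx i)
  rw [hxw]
  exact (convex_convexHull ℝ _).sum_mem (fun i _ ↦ hw₀ i) hw
    fun i _ ↦ subset_convexHull ℝ _ (mem_range_self i)

end Supporting

section FacesOfConvexSets

variable {E : Type*} [NormedAddCommGroup E] [NormedSpace ℝ E] {P Q G : Set E}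

lemma exists_mem_openSegment_of_mem_intrinsicInterior {x m : E}
    (hx : x ∈ intrinsicInterior ℝ Q) (hm : m ∈ affineSpan ℝ Q) :
    ∃ y ∈ Q, x ∈ openSegment ℝ m y := by
  obtain ⟨x, hx', rfl⟩ := mem_intrinsicInterior.1 hx
  let ray : ℝ → affineSpan ℝ Q := fun t ↦
    ⟨AffineMap.lineMap m (x : E) t, AffineMap.lineMap_mem t hm x.2⟩
  have ray_one : ray 1 = x := Subtype.ext (AffineMap.lineMap_apply_one _ _)
  have ray_continuous : Continuous ray :=
    AffineMap.lineMap_continuous.subtype_mk _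
  have near_one : ∀ᶠ t in nhds 1, ray t ∈ interior ((↑) ⁻¹' Q : Set (affineSpan ℝ Q)) :=
    ray_continuous.continuousAt.eventually_mem (isOpen_interior.mem_nhds (ray_one.symm ▸ hx'))
  obtain ⟨t, ht, hy⟩ := near_one.exists_gt
  refine ⟨ray t, mem_preimage.1 (interior_subset hy), ?_⟩
  rw [openSegment_eq_image_lineMap]
  have ht0 : 0 < t := one_pos.trans ht
  refine ⟨t⁻¹, ⟨inv_pos.2 ht0, inv_lt_one_of_one_lt₀ ht⟩, ?_⟩
  simp [ray, ht0.ne']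

lemma subset_of_isExtreme_of_mem_intrinsicInterior (hG : IsExtreme ℝ Q G) {x : E}
    (hx : x ∈ intrinsicInterior ℝ Q) (hxG : x ∈ G) : Q ⊆ G := by
  intro m hm
  obtain ⟨y, hy, hxy⟩ :=
    exists_mem_openSegment_of_mem_intrinsicInterior hx (subset_affineSpan ℝ Q hm)
  exact hG.2 hm hy hxG hxy

section FiniteDimensional

variable [FiniteDimensional ℝ E]

lemma mem_of_isExtreme_of_mem_affineSpan (hne : G.Nonempty) (hconv : Convex ℝ G)
    (hG : IsExtreme ℝ Q G) {m : E} (hm : m ∈ Q) (hmG : m ∈ affineSpan ℝ G) : m ∈ G := by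
  obtain ⟨x, hx⟩ := hne.intrinsicInterior hconv
  obtain ⟨y, hy, hxy⟩ := exists_mem_openSegment_of_mem_intrinsicInterior hx hmG
  exact hG.2 hm (hG.1 hy) (intrinsicInterior_subset hx) hxy

lemma eq_of_isExtreme_of_finrank_vectorSpan_le (hne : G.Nonempty) (hconv : Convex ℝ G)
    (hG : IsExtreme ℝ Q G)
    (hdim : Module.finrank ℝ (vectorSpan ℝ Q) ≤ Module.finrank ℝ (vectorSpan ℝ G)) : G = Q := by
  have hspan : affineSpan ℝ G = affineSpan ℝ Q := by
    refine AffineSubspace.eq_of_direction_eq_of_nonempty_of_le ?_ (hne.affineSpan ℝ)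
      (affineSpan_mono ℝ hG.1)
    rw [direction_affineSpan, direction_affineSpan]
    exact Submodule.eq_of_le_of_finrank_le (vectorSpan_mono ℝ hG.1) hdim
  exact hG.1.antisymm fun m hm ↦ mem_of_isExtreme_of_mem_affineSpan hne hconv hG hm <|
    hspan ▸ subset_affineSpan ℝ Q hm

end FiniteDimensional

lemma IsSupporting.isExposed [FiniteDimensional ℝ E] {f : E →ₗ[ℝ] ℝ} {c : ℝ}
    (h : IsSupporting f c Q G) (hGQ : G ⊆ Q) : IsExposed ℝ Q G := by
  rintro ⟨a, ha⟩
  have ha' : f a = c := (h.eq_iff a (hGQ ha)).2 ha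
  refine ⟨-LinearMap.toContinuousLinearMap f, Subset.antisymm (fun x hx ↦ ⟨hGQ hx, ?_⟩) ?_⟩
  · intro y hy
    simpa [(h.eq_iff x (hGQ hx)).2 hx] using h.le y hy
  · rintro x ⟨hx, hmax⟩
    refine (h.eq_iff x hx).1 (le_antisymm ?_ (h.le x hx))
    simpa [ha'] using hmax a (hGQ ha)

lemma exists_isSupporting_of_finrank_eq_add_one [FiniteDimensional ℝ E] (hQ : Convex ℝ Q)
    (hne : G.Nonempty) (hconv : Convex ℝ G) (hG : IsExtreme ℝ Q G)
    (hdim : Module.finrank ℝ (vectorSpan ℝ Q) = Module.finrank ℝ (vectorSpan ℝ G) + 1) :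
    ∃ f c, IsSupporting f c Q G := by
  obtain ⟨a, ha⟩ := hne
  have hle : vectorSpan ℝ G ≤ vectorSpan ℝ Q := vectorSpan_mono ℝ hG.1
  obtain ⟨w, hwQ, hwG⟩ : ∃ w ∈ vectorSpan ℝ Q, w ∉ vectorSpan ℝ G := by
    refine SetLike.exists_of_lt (hle.lt_of_ne fun h ↦ ?_)
    rw [h] at hdim
    omega
  obtain ⟨f, hfw, hfG⟩ := Submodule.exists_le_ker_of_notMem hwG
  have hker : vectorSpan ℝ Q ⊓ LinearMap.ker f = vectorSpan ℝ G := by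
    refine (Submodule.eq_of_le_of_finrank_le (le_inf hle hfG) ?_).symm
    have : vectorSpan ℝ Q ⊓ LinearMap.ker f < vectorSpan ℝ Q :=
      inf_le_left.lt_of_ne fun h ↦ hfw (h.ge hwQ).2
    have := Submodule.finrank_lt_finrank_of_lt this
    omega
  have hf : ∀ x ∈ Q, f x = f a ↔ x ∈ G := by
    intro x hx
    refine ⟨fun hfx ↦ ?_, fun hxG ↦ ?_⟩
    · refine mem_of_isExtreme_of_mem_affineSpan ⟨a, ha⟩ hconv hG hx ?_
      rw [← AffineSubspace.vsub_right_mem_direction_iff_mem (subset_affineSpan ℝ G ha),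
        direction_affineSpan, ← hker]
      exact ⟨vsub_mem_vectorSpan ℝ hx (hG.1 ha), by simp [hfx]⟩
    · have : f (x - a) = 0 := hfG (vsub_mem_vectorSpan ℝ hxG ha)
      rwa [map_sub, sub_eq_zero] at this
  exact (isSupporting_or_neg hQ hG hf).elim (⟨f, _, ·⟩) (⟨-f, _, ·⟩)

lemma convexHull_extremePoints_eq (hcompact : IsCompact P) (hconv : Convex ℝ P)
    (hfin : (P.extremePoints ℝ).Finite) : convexHull ℝ (P.extremePoints ℝ) = P := by
  have hkm := closure_convexHull_extremePoints hcompact hconv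
  rwa [(hfin.isCompact_convexHull ℝ).isClosed.closure_eq] at hkm

lemma exists_forall_lt_of_convexIndependent {V : Set E} (hfin : V.Finite)
    (hV : ConvexIndependent ℝ ((↑) : V → E)) {x : E} (hx : x ∈ V) :
    ∃ φ : E →ₗ[ℝ] ℝ, ∀ y ∈ V, y ≠ x → φ y < φ x := by
  have hnotMem := convexIndependent_set_iff_notMem_convexHull_sdiff.1 hV x hx
  obtain ⟨φ, u, hφ, hu⟩ := geometric_hahn_banach_closed_point (convex_convexHull ℝ (V \ {x}))
    (hfin.sdiff.isCompact_convexHull ℝ).isClosed hnotMem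
  exact ⟨φ, fun y hy hyx ↦ (hφ y (subset_convexHull ℝ _ ⟨hy, hyx⟩)).trans hu⟩

end FacesOfConvexSets

section PlaneGeometry

variable {E : Type*} [AddCommGroup E] [Module ℝ E]
  {ω : E →ₗ[ℝ] E →ₗ[ℝ] ℝ} {S : Submodule ℝ E} {W : Set E}

/-- `ω` restricts to an area form on the plane `S`. That `S` is at most two-dimensional is
encoded by Cramer's rule. -/
structure IsAreaForm (ω : E →ₗ[ℝ] E →ₗ[ℝ] ℝ) (S : Submodule ℝ E) : Prop where
  isAlt : ω.IsAlt
  cramer : ∀ x ∈ S, ∀ y ∈ S, ∀ z ∈ S, ω x y • z = ω z y • x + ω x z • y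
  nondegenerate : ∀ x ∈ S, x ≠ 0 → ∃ y ∈ S, ω x y ≠ 0

lemma exists_isAreaForm (hS : Module.finrank ℝ S = 2) :
    ∃ ω : E →ₗ[ℝ] E →ₗ[ℝ] ℝ, IsAreaForm ω S := by
  have : Module.Finite ℝ S := Module.finite_of_finrank_eq_succ hS
  let b := Module.finBasisOfFinrankEq ℝ S hS
  obtain ⟨p, hp⟩ := LinearMap.exists_extend (b.coord 0)
  obtain ⟨q, hq⟩ := LinearMap.exists_extend (b.coord 1)
  have hp (i : Fin 2) : p (b i) = if i = 0 then 1 else 0 := by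
    simpa [Finsupp.single_apply] using LinearMap.congr_fun hp (b i)
  have hq (i : Fin 2) : q (b i) = if i = 1 then 1 else 0 := by
    simpa [Finsupp.single_apply] using LinearMap.congr_fun hq (b i)
  have coordinates {z : E} (hz : z ∈ S) : z = p z • (b 0 : E) + q z • (b 1 : E) := by
    have hrepr := congrArg Subtype.val (b.sum_repr ⟨z, hz⟩)
    simp only [Fin.sum_univ_two, Submodule.coe_add, Submodule.coe_smul] at hrepr
    have hpz := congrArg p hrepr
    have hqz := congrArg q hrepr
    simp only [map_add, map_smul, hp, hq, smul_eq_mul, ↓reduceIte, one_ne_zero, zero_ne_one,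
      mul_one, mul_zero, add_zero, zero_add] at hpz hqz
    rw [← hpz, ← hqz, hrepr]
  let mul := LinearMap.mul ℝ ℝ
  refine ⟨mul.compl₁₂ p q - mul.compl₁₂ q p, fun x ↦ ?_, fun x hx y hy z hz ↦ ?_,
    fun x hx hx0 ↦ ?_⟩
  · simp [mul, mul_comm]
  · rw [coordinates hx, coordinates hy, coordinates hz]
    simp only [mul, LinearMap.sub_apply, map_add, map_smul, LinearMap.add_apply,
      LinearMap.smul_apply, LinearMap.compl₁₂_apply, hp, ↓reduceIte, hq, zero_ne_one, smul_eq_mul,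
      mul_one, LinearMap.mul_apply_apply, one_ne_zero, map_zero, LinearMap.zero_apply, smul_add]
    module
  · by_contra! hω
    have hpx : p x = 0 := by simpa [mul, hp, hq] using hω _ (b 1).2
    have hqx : q x = 0 := by simpa [mul, hp, hq] using hω _ (b 0).2
    exact hx0 (by rw [coordinates hx, hpx, hqx, zero_smul, zero_smul, add_zero])

lemma IsAreaForm.exists_smul_eq (h : IsAreaForm ω S) {x y : E} (hx : x ∈ S) (hy : y ∈ S)
    (hx0 : x ≠ 0) (hxy : ω x y = 0) : ∃ t : ℝ, t • x = y := by
  obtain ⟨z, hz, hxz⟩ := h.nondegenerate x hx hx0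
  have hcramer := h.cramer x hx z hz y hy
  rw [hxy, zero_smul, add_zero] at hcramer
  exact ⟨(ω x z)⁻¹ * ω y z, by rw [mul_smul, ← hcramer, inv_smul_smul₀ hxz]⟩

/-- Twice the signed area of the triangle `a b c` with respect to the area form `ω`. -/
def signedArea (ω : E →ₗ[ℝ] E →ₗ[ℝ] ℝ) (a b c : E) : ℝ := ω (b - a) (c - a)

lemma signedArea_rotate (hω : ω.IsAlt) (a b c : E) :
    signedArea ω a b c = signedArea ω b c a := by
  simp only [signedArea, map_sub, LinearMap.sub_apply, hω.self_eq_zero, ← hω.neg b c,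
    ← hω.neg a c, ← hω.neg a b]
  ring

lemma signedArea_swap (hω : ω.IsAlt) (a b c : E) :
    signedArea ω a c b = -signedArea ω a b c :=
  (hω.neg _ _).symm

lemma not_wbtw_of_convexIndependent (hW : ConvexIndependent ℝ ((↑) : W → E)) {a b c : E}
    (ha : a ∈ W) (hb : b ∈ W) (hc : c ∈ W) (hab : a ≠ b) (hbc : b ≠ c) : ¬ Wbtw ℝ a b c := by
  intro h
  refine convexIndependent_set_iff_notMem_convexHull_sdiff.1 hW b hb ?_
  rw [← mem_segment_iff_wbtw] at h
  exact segment_subset_convexHull (by simp [ha, hab]) (by simp [hc, hbc.symm]) h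

/-- `W` is the vertex set of a convex polygon in a translate of the plane `S`, oriented by the
area form `ω`. -/
structure IsPolygon (ω : E →ₗ[ℝ] E →ₗ[ℝ] ℝ) (S : Submodule ℝ E) (W : Set E) : Prop where
  isAreaForm : IsAreaForm ω S
  sub_mem : ∀ x ∈ W, ∀ y ∈ W, y - x ∈ S
  convexIndependent : ConvexIndependent ℝ ((↑) : W → E)
  finite : W.Finite
  three_le_ncard : 3 ≤ W.ncard

/-- `b` is the vertex following `a` in the polygon `W`: all of `W` lies to the left of the line
from `a` to `b`. -/
structure IsNext (ω : E →ₗ[ℝ] E →ₗ[ℝ] ℝ) (W : Set E) (a b : E) : Prop where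
  left_mem : a ∈ W
  right_mem : b ∈ W
  ne : a ≠ b
  signedArea_nonneg : ∀ y ∈ W, 0 ≤ signedArea ω a b y

namespace IsPolygon

variable {a b c d y : E}

lemma exists_mem_ne_ne (h : IsPolygon ω S W) (a b : E) : ∃ c ∈ W, c ≠ a ∧ c ≠ b := by
  have hcard : ({a, b} : Set E).ncard < W.ncard :=
    ((ncard_insert_le a {b}).trans_eq (by rw [ncard_singleton])).trans_lt h.three_le_ncard
  obtain ⟨c, hcW, hc⟩ := exists_mem_notMem_of_ncard_lt_ncard hcard
  exact ⟨c, hcW, by simpa using hc⟩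

lemma signedArea_cramer (h : IsPolygon ω S W) (ha : a ∈ W) (hb : b ∈ W) (hc : c ∈ W)
    (hd : d ∈ W) : signedArea ω a b c • (d - a) =
      signedArea ω a d c • (b - a) + signedArea ω a b d • (c - a) :=
  h.isAreaForm.cramer _ (h.sub_mem a ha b hb) _ (h.sub_mem a ha c hc) _ (h.sub_mem a ha d hd)

lemma signedArea_ne_zero (h : IsPolygon ω S W) (ha : a ∈ W) (hb : b ∈ W) (hc : c ∈ W)
    (hab : a ≠ b) (hac : a ≠ c) (hbc : b ≠ c) : signedArea ω a b c ≠ 0 := by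
  intro h0
  obtain ⟨t, ht⟩ := h.isAreaForm.exists_smul_eq (h.sub_mem a ha b hb) (h.sub_mem a ha c hc)
    (sub_ne_zero.2 hab.symm) h0
  have hcollinear : Collinear ℝ {a, b, c} := by
    rw [collinear_iff_of_mem (mem_insert a _)]
    refine ⟨b - a, ?_⟩
    rintro x (rfl | rfl | rfl)
    exacts [⟨0, by simp⟩, ⟨1, by simp⟩, ⟨t, by simp [ht]⟩]
  rcases hcollinear.wbtw_or_wbtw_or_wbtw with hw | hw | hw
  · exact not_wbtw_of_convexIndependent h.convexIndependent ha hb hc hab hbc hw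
  · exact not_wbtw_of_convexIndependent h.convexIndependent hb hc ha hbc hac.symm hw
  · exact not_wbtw_of_convexIndependent h.convexIndependent hc ha hb hac.symm hab hw

lemma isNext_left_unique (h : IsPolygon ω S W) (ha : IsNext ω W a c) (hb : IsNext ω W b c) :
    a = b := by
  by_contra hab
  have hswap : signedArea ω b c a = -signedArea ω a c b := by
    rw [signedArea_rotate h.isAreaForm.isAlt, signedArea_rotate h.isAreaForm.isAlt,
      signedArea_swap h.isAreaForm.isAlt]
  refine h.signedArea_ne_zero ha.left_mem ha.right_mem hb.left_mem ha.ne hab hb.ne.symm ?_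
  exact le_antisymm (by linarith [hb.signedArea_nonneg a ha.left_mem])
    (ha.signedArea_nonneg b hb.left_mem)

lemma eq_or_eq_of_signedArea_eq_zero (h : IsPolygon ω S W) (hab : IsNext ω W a b) (hy : y ∈ W)
    (h0 : signedArea ω a b y = 0) : y = a ∨ y = b := by
  by_contra! hne
  exact h.signedArea_ne_zero hab.left_mem hab.right_mem hy hab.ne hne.1.symm hne.2.symm h0

lemma not_isNext_symm (h : IsPolygon ω S W) (hab : IsNext ω W a b) : ¬ IsNext ω W b a := by
  intro hba
  obtain ⟨c, hc, hca, hcb⟩ := h.exists_mem_ne_ne a b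
  have hswap : signedArea ω b a c = -signedArea ω a b c := by
    rw [signedArea_rotate h.isAreaForm.isAlt, signedArea_swap h.isAreaForm.isAlt]
  have h0 : signedArea ω a b c = 0 := le_antisymm
    (by linarith [hba.signedArea_nonneg c hc]) (hab.signedArea_nonneg c hc)
  exact (h.eq_or_eq_of_signedArea_eq_zero hab hc h0).elim hca hcb

lemma signedArea_pos (h : IsPolygon ω S W) (hda : IsNext ω W d a) (hab : IsNext ω W a b) :
    0 < signedArea ω a b d := by
  refine (hab.signedArea_nonneg d hda.left_mem).lt_of_ne' fun h0 ↦ ?_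
  rcases h.eq_or_eq_of_signedArea_eq_zero hab hda.left_mem h0 with rfl | rfl
  · exact hda.ne rfl
  · exact h.not_isNext_symm hab hda

lemma exists_sub_eq_smul_add_smul (h : IsPolygon ω S W) (hda : IsNext ω W d a)
    (hab : IsNext ω W a b) (hy : y ∈ W) :
    ∃ α β : ℝ, 0 ≤ α ∧ 0 ≤ β ∧ y - a = α • (b - a) + β • (d - a) := by
  have hpos := h.signedArea_pos hda hab
  have hady : 0 ≤ signedArea ω a y d := by
    rw [← signedArea_rotate h.isAreaForm.isAlt]
    exact hda.signedArea_nonneg y hy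
  refine ⟨signedArea ω a y d / signedArea ω a b d, signedArea ω a b y / signedArea ω a b d,
    div_nonneg hady hpos.le, div_nonneg (hab.signedArea_nonneg y hy) hpos.le, ?_⟩
  rw [← smul_right_inj hpos.ne', h.signedArea_cramer hab.left_mem hab.right_mem hda.left_mem hy,
    smul_add, smul_smul, smul_smul, mul_div_cancel₀ _ hpos.ne', mul_div_cancel₀ _ hpos.ne']

lemma apply_le_of_apply_neighbours_le (h : IsPolygon ω S W) (φ : E →ₗ[ℝ] ℝ)
    (hda : IsNext ω W d a) (hab : IsNext ω W a b) (hd : φ d ≤ φ a) (hb : φ b ≤ φ a)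
    (hy : y ∈ W) : φ y ≤ φ a := by
  obtain ⟨α, β, hα, hβ, hcone⟩ := h.exists_sub_eq_smul_add_smul hda hab hy
  have hφ := congrArg φ hcone
  simp only [map_add, map_smul, map_sub, smul_eq_mul] at hφ
  have := mul_nonpos_of_nonneg_of_nonpos hα (sub_nonpos.2 hb)
  have := mul_nonpos_of_nonneg_of_nonpos hβ (sub_nonpos.2 hd)
  linarith

end IsPolygon

end PlaneGeometry

namespace IsPolygon

variable {E : Type*} [NormedAddCommGroup E] [NormedSpace ℝ E]
  {ω : E →ₗ[ℝ] E →ₗ[ℝ] ℝ} {S : Submodule ℝ E} {W : Set E} {a : E}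

lemma exists_isNext (h : IsPolygon ω S W) (ha : a ∈ W) : ∃ b, IsNext ω W a b := by
  obtain ⟨φ, hφ⟩ := exists_forall_lt_of_convexIndependent h.finite h.convexIndependent ha
  obtain ⟨m, hm, hma, -⟩ := h.exists_mem_ne_ne a a
  have hdrop : ∀ y ∈ W \ {a}, 0 < φ a - φ y := fun y hy ↦ sub_pos.2 (hφ y hy.1 hy.2)
  -- Seen from `a`, the next vertex `b` minimises the slope `signedArea ω a m y / (φ a - φ y)`.
  obtain ⟨t, ht, b, ⟨hb, hba⟩, htb⟩ := exists_tilt h.finite.sdiff ⟨m, hm, hma⟩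
    (signedArea ω a m) (fun y ↦ φ a - φ y) hdrop
  refine ⟨b, ha, hb, Ne.symm hba, fun y hy ↦ ?_⟩
  rcases eq_or_ne y a with rfl | hya
  · simp [signedArea]
  have hcramer := congrArg φ (h.signedArea_cramer ha hb hy hm)
  simp only [map_add, map_smul, map_sub, smul_eq_mul] at hcramer
  rw [signedArea_swap h.isAreaForm.isAlt a m b] at hcramer
  have hprod : signedArea ω a b y * (φ a - φ m) =
      (signedArea ω a m y + t * (φ a - φ y)) * (φ a - φ b) := by
    linear_combination -hcramer - (φ a - φ y) * htb
  refine nonneg_of_mul_nonneg_left ?_ (hdrop m ⟨hm, hma⟩)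
  rw [hprod]
  exact mul_nonneg (ht y ⟨hy, hya⟩) (hdrop b ⟨hb, hba⟩).le

lemma isCycleOn_of_isNext (h : IsPolygon ω S W) {σ : Equiv.Perm W}
    (hσ : ∀ a : W, IsNext ω W a (σ a)) : σ.IsCycleOn univ := by
  have := h.finite.fintype
  refine ⟨by simp, fun x _ y _ ↦ ?_⟩
  by_contra hxy
  obtain ⟨φ, hφ⟩ := exists_forall_lt_of_convexIndependent h.finite h.convexIndependent y.2
  -- A vertex maximising `φ` off the cycle of `y` is a local, hence global, maximum of `φ`.
  obtain ⟨a, ha, hmax⟩ := exists_max_image {z : W | ¬ σ.SameCycle z y} (fun z ↦ φ z)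
    (toFinite _) ⟨x, hxy⟩
  have hnext : φ (σ a) ≤ φ a := hmax _ (by simpa using ha)
  have hprev : φ (σ⁻¹ a) ≤ φ a := hmax _ (by simpa using ha)
  have hya : φ y ≤ φ a := h.apply_le_of_apply_neighbours_le φ
    (by simpa using hσ (σ⁻¹ a)) (hσ a) hprev hnext y.2
  refine (hφ a a.2 fun hay ↦ ha ?_).not_ge hya
  rw [Subtype.ext hay]

lemma exists_cyclic_order (h : IsPolygon ω S W) :
    ∃ (k : ℕ) (v : Fin k → E), 3 ≤ k ∧ Function.Injective v ∧ range v = W ∧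
      ∀ i, IsNext ω W (v i) (v (nxt i)) := by
  have := h.finite.fintype
  choose next hnext using fun a : W ↦ h.exists_isNext a.2
  let succ : W → W := fun a ↦ ⟨next a, (hnext a).right_mem⟩
  have succ_injective : Function.Injective succ := by
    intro a b hab
    have hnext_eq : next a = next b := congrArg Subtype.val hab
    exact Subtype.ext (h.isNext_left_unique (hnext a) (hnext_eq ▸ hnext b))
  let σ : Equiv.Perm W := .ofBijective succ (Finite.injective_iff_bijective.1 succ_injective)
  obtain ⟨c, hc, -⟩ := h.exists_mem_ne_ne 0 0
  have : Nonempty W := ⟨c, hc⟩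
  obtain ⟨e, he⟩ := exists_equiv_fin_nxt (h.isCycleOn_of_isNext (σ := σ) hnext)
  refine ⟨_, fun i ↦ e i, ?_, Subtype.val_injective.comp e.injective, ?_, fun i ↦ ?_⟩
  · rw [← Nat.card_eq_fintype_card, Nat.card_coe_set_eq]
    exact h.three_le_ncard
  · rw [range_comp' Subtype.val, e.range_eq_univ, image_univ, Subtype.range_coe]
  · simp only [he]
    exact hnext (e i)

end IsPolygon

section Faces

variable {P A B : Set E3} {v : E3}

lemma setDim_mono (hAB : A ⊆ B) : setDim A ≤ setDim B :=
  Submodule.finrank_mono (vectorSpan_mono ℝ hAB)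

lemma setDim_segment {a b : E3} (hab : a ≠ b) : setDim (segment ℝ a b) = 1 := by
  rw [setDim, vectorSpan_segment, finrank_span_singleton (vsub_ne_zero.2 hab.symm)]

namespace IsFaceOf

lemma nonempty (hA : IsFaceOf A P) : A.Nonempty := hA.1

lemma isClosed (hA : IsFaceOf A P) : IsClosed A := hA.2.1

lemma convex (hA : IsFaceOf A P) : Convex ℝ A := hA.2.2.1

lemma isExtreme (hA : IsFaceOf A P) : IsExtreme ℝ P A := hA.2.2.2

lemma subset (hA : IsFaceOf A P) : A ⊆ P := hA.isExtreme.1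

lemma inter (hA : IsFaceOf A P) (hB : IsFaceOf B P) (hne : (A ∩ B).Nonempty) :
    IsFaceOf (A ∩ B) P :=
  ⟨hne, hA.isClosed.inter hB.isClosed, hA.convex.inter hB.convex,
    hA.isExtreme.inter hB.isExtreme⟩

lemma trans (hB : IsFaceOf B A) (hA : IsFaceOf A P) : IsFaceOf B P :=
  ⟨hB.nonempty, hB.isClosed, hB.convex, hA.isExtreme.trans hB.isExtreme⟩

lemma of_subset (hB : IsFaceOf B P) (hA : IsFaceOf A P) (hBA : B ⊆ A) : IsFaceOf B A :=
  ⟨hB.nonempty, hB.isClosed, hB.convex, hB.isExtreme.mono hA.subset hBA⟩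

lemma eq_of_setDim_le (hA : IsFaceOf A P) (hdim : setDim P ≤ setDim A) : A = P :=
  eq_of_isExtreme_of_finrank_vectorSpan_le hA.nonempty hA.convex hA.isExtreme hdim

lemma setDim_lt (hA : IsFaceOf A P) (hne : A ≠ P) : setDim A < setDim P := by
  by_contra! hdim
  exact hne (hA.eq_of_setDim_le hdim)

lemma eq_of_subset_of_setDim_le (hA : IsFaceOf A P) (hB : IsFaceOf B P) (hAB : A ⊆ B)
    (hdim : setDim B ≤ setDim A) : A = B :=
  (hA.of_subset hB hAB).eq_of_setDim_le hdim

lemma exists_isSupporting (hA : IsFaceOf A P) (hP : Convex ℝ P)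
    (hdim : setDim P = setDim A + 1) : ∃ f c, IsSupporting f c P A :=
  exists_isSupporting_of_finrank_eq_add_one hP hA.nonempty hA.convex hA.isExtreme hdim

lemma disjoint_intrinsicInterior (hA : IsFaceOf A P) (hne : A ≠ P) :
    Disjoint (intrinsicInterior ℝ P) A :=
  disjoint_left.2 fun _ hx hxA ↦
    hne (hA.subset.antisymm (subset_of_isExtreme_of_mem_intrinsicInterior hA.isExtreme hx hxA))

end IsFaceOf

lemma isVertexOf_iff : IsVertexOf v P ↔ v ∈ P.extremePoints ℝ := by
  simp [IsVertexOf, IsFaceOf, convex_singleton]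

lemma isEdgeOf_iff_of_isFaceOf (hA : IsFaceOf A P) {e : Set E3} :
    IsEdgeOf e A ↔ IsEdgeOf e P ∧ e ⊆ A :=
  ⟨fun h ↦ ⟨⟨h.1.trans hA, h.2⟩, h.1.subset⟩, fun h ↦ ⟨h.1.1.of_subset hA h.2, h.1.2⟩⟩

namespace IsPolytope

lemma isCompact (hP : IsPolytope P) : IsCompact P := by
  obtain ⟨V, rfl⟩ := hP
  exact V.finite_toSet.isCompact_convexHull ℝ

lemma convex (hP : IsPolytope P) : Convex ℝ P := by
  obtain ⟨V, rfl⟩ := hP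
  exact convex_convexHull ℝ _

lemma finite_extremePoints (hP : IsPolytope P) : (P.extremePoints ℝ).Finite := by
  obtain ⟨V, rfl⟩ := hP
  exact V.finite_toSet.subset extremePoints_convexHull_subset

lemma convexHull_extremePoints (hP : IsPolytope P) : convexHull ℝ (P.extremePoints ℝ) = P :=
  convexHull_extremePoints_eq hP.isCompact hP.convex hP.finite_extremePoints

lemma subset_of_extremePoints_subset (hP : IsPolytope P) (hB : Convex ℝ B)
    (h : P.extremePoints ℝ ⊆ B) : P ⊆ B := by
  rw [← hP.convexHull_extremePoints]
  exact convexHull_min h hB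

lemma isFaceOf_of_isSupporting (hP : IsPolytope P) {f : E3 →ₗ[ℝ] ℝ} {c : ℝ}
    (hf : IsSupporting f c P A) (hAP : A ⊆ P) (hne : A.Nonempty) : IsFaceOf A P :=
  have hexposed := hf.isExposed hAP
  ⟨hne, hexposed.isClosed hP.isCompact.isClosed, hexposed.convex hP.convex, hexposed.isExtreme⟩

lemma isPolytope_of_isFaceOf (hP : IsPolytope P) (hA : IsFaceOf A P) : IsPolytope A := by
  have hfin : (A.extremePoints ℝ).Finite :=
    hP.finite_extremePoints.subset hA.isExtreme.extremePoints_subset_extremePoints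
  refine ⟨hfin.toFinset, ?_⟩
  rw [hfin.coe_toFinset, convexHull_extremePoints_eq
    (hP.isCompact.of_isClosed_subset hA.isClosed hA.subset) hA.convex hfin]

lemma exists_extremePoint_mem (hP : IsPolytope P) (hA : IsFaceOf A P) :
    ∃ v ∈ P.extremePoints ℝ, v ∈ A := by
  obtain ⟨v, hv⟩ := (hP.isPolytope_of_isFaceOf hA).isCompact.extremePoints_nonempty hA.nonempty
  exact ⟨v, hA.isExtreme.extremePoints_subset_extremePoints hv, extremePoints_subset hv⟩

lemma setDim_lt_ncard_extremePoints (hP : IsPolytope P) (hne : P.Nonempty) :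
    setDim P < (P.extremePoints ℝ).ncard := by
  have := hP.finite_extremePoints.fintype
  have := (hP.isCompact.extremePoints_nonempty hne).to_subtype
  have hle := finrank_vectorSpan_range_add_one_le ℝ ((↑) : P.extremePoints ℝ → E3)
  rwa [Subtype.range_coe, ← vectorSpan_convexHull, hP.convexHull_extremePoints,
    ← Nat.card_eq_fintype_card, Nat.card_coe_set_eq] at hle

lemma finite_setOf_isFaceOf (hP : IsPolytope P) : {A | IsFaceOf A P}.Finite := by
  refine Finite.of_finite_image (f := fun A ↦ A.extremePoints ℝ) ?_ fun A hA B hB hAB ↦ ?_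
  · refine hP.finite_extremePoints.finite_subsets.subset ?_
    rintro _ ⟨A, hA, rfl⟩
    exact hA.isExtreme.extremePoints_subset_extremePoints
  · rw [← (hP.isPolytope_of_isFaceOf hA).convexHull_extremePoints,
      ← (hP.isPolytope_of_isFaceOf hB).convexHull_extremePoints]
    exact congrArg (convexHull ℝ) hAB

end IsPolytope

end Faces

section BoundaryCycle

variable {A e : Set E3} {ω : E3 →ₗ[ℝ] E3 →ₗ[ℝ] ℝ} {S : Submodule ℝ E3} {a b d : E3}

lemma exists_isPolygon_extremePoints (hA : IsPolytope A) (hdim : setDim A = 2) :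
    ∃ ω, IsPolygon ω (vectorSpan ℝ A) (A.extremePoints ℝ) := by
  obtain ⟨ω, hω⟩ := exists_isAreaForm hdim
  have hne : A.Nonempty := by
    rw [nonempty_iff_ne_empty]
    rintro rfl
    rw [setDim, vectorSpan_empty, finrank_bot] at hdim
    omega
  refine ⟨ω, hω, fun x hx y hy ↦ ?_, hA.convex.convexIndependent_extremePoints,
    hA.finite_extremePoints, ?_⟩
  · exact vsub_mem_vectorSpan ℝ (extremePoints_subset hy) (extremePoints_subset hx)
  · have := hA.setDim_lt_ncard_extremePoints hne
    omega

lemma isEdgeOf_segment_of_isNext (hA : IsPolytope A)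
    (hpoly : IsPolygon ω S (A.extremePoints ℝ)) (hab : IsNext ω (A.extremePoints ℝ) a b) :
    IsEdgeOf (segment ℝ a b) A := by
  have signedArea_eq (x : E3) : signedArea ω a b x = ω (b - a) x - ω (b - a) a :=
    map_sub (ω (b - a)) x a
  have hle : ∀ x ∈ A, ω (b - a) a ≤ ω (b - a) x := by
    refine hA.subset_of_extremePoints_subset
      (convex_halfSpace_ge (ω (b - a)).isLinear (ω (b - a) a)) fun x hx ↦ ?_
    exact sub_nonneg.1 (signedArea_eq x ▸ hab.signedArea_nonneg x hx)
  have ha : a ∈ A := extremePoints_subset hab.left_mem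
  have hb : b ∈ A := extremePoints_subset hab.right_mem
  have hfa : ω (b - a) b = ω (b - a) a := by
    rw [← sub_eq_zero, ← map_sub, hpoly.isAreaForm.isAlt]
  have hface : IsFaceOf {x ∈ A | ω (b - a) x = ω (b - a) a} A :=
    hA.isFaceOf_of_isSupporting (isSupporting_sep hle) (sep_subset _ _) ⟨a, ha, rfl⟩
  suffices segment ℝ a b = {x ∈ A | ω (b - a) x = ω (b - a) a} from
    ⟨this ▸ hface, setDim_segment hab.ne⟩
  refine (hface.convex.segment_subset ⟨ha, rfl⟩ ⟨hb, hfa⟩).antisymm ?_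
  refine (hA.isPolytope_of_isFaceOf hface).subset_of_extremePoints_subset
    (convex_segment a b) fun x hx ↦ ?_
  have hx0 : signedArea ω a b x = 0 := by
    rw [signedArea_eq, (extremePoints_subset hx).2, sub_self]
  rcases hpoly.eq_or_eq_of_signedArea_eq_zero hab
    (hface.isExtreme.extremePoints_subset_extremePoints hx) hx0 with rfl | rfl
  exacts [left_mem_segment ℝ x b, right_mem_segment ℝ a x]

lemma mem_or_mem_of_isEdgeOf (hA : IsPolytope A) (hdim : setDim A = 2)
    (hpoly : IsPolygon ω S (A.extremePoints ℝ)) (he : IsEdgeOf e A)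
    (hda : IsNext ω (A.extremePoints ℝ) d a) (hab : IsNext ω (A.extremePoints ℝ) a b)
    (hae : a ∈ e) : d ∈ e ∨ b ∈ e := by
  by_contra! hne
  obtain ⟨f, c, hf⟩ := he.1.exists_isSupporting hA.convex (by rw [hdim, he.2])
  have hfa : f a = c := (hf.eq_iff a (he.1.subset hae)).2 hae
  have hfd : f a < f d := hfa ▸ hf.lt (extremePoints_subset hda.left_mem) hne.1
  have hfb : f a < f b := hfa ▸ hf.lt (extremePoints_subset hab.right_mem) hne.2
  obtain ⟨y, hy, hya⟩ : ∃ y ∈ e.extremePoints ℝ, y ≠ a := by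
    refine exists_ne_of_one_lt_ncard ?_ a
    exact he.2 ▸ (hA.isPolytope_of_isFaceOf he.1).setDim_lt_ncard_extremePoints he.1.nonempty
  have hye : y ∈ e := extremePoints_subset hy
  obtain ⟨α, β, hα, hβ, hcone⟩ := hpoly.exists_sub_eq_smul_add_smul hda hab
    (he.1.isExtreme.extremePoints_subset_extremePoints hy)
  have hzero : α * (f b - f a) + β * (f d - f a) = 0 := by
    have := congrArg f hcone
    simp only [map_add, map_smul, map_sub, smul_eq_mul] at this
    rw [← this, hfa, (hf.eq_iff y (he.1.subset hye)).2 hye, sub_self]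
  rw [add_eq_zero_iff_of_nonneg (mul_nonneg hα (sub_pos.2 hfb).le)
    (mul_nonneg hβ (sub_pos.2 hfd).le), mul_eq_zero_iff_right (sub_pos.2 hfb).ne',
    mul_eq_zero_iff_right (sub_pos.2 hfd).ne'] at hzero
  refine hya (sub_eq_zero.1 ?_)
  rw [hcone, hzero.1, hzero.2, zero_smul, zero_smul, add_zero]

/-- `v` lists the vertices of the polygon `A` in cyclic order: the edges of `A` are the segments
joining successive terms. -/
structure IsBoundaryCycle (A : Set E3) {k : ℕ} (v : Fin k → E3) : Prop where
  three_le : 3 ≤ k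
  injective : Function.Injective v
  range_eq : range v = A.extremePoints ℝ
  isEdgeOf_iff : ∀ e, IsEdgeOf e A ↔ ∃ i, segment ℝ (v i) (v (nxt i)) = e

lemma exists_isBoundaryCycle (hA : IsPolytope A) (hdim : setDim A = 2) :
    ∃ (k : ℕ) (v : Fin k → E3), IsBoundaryCycle A v := by
  obtain ⟨ω, hpoly⟩ := exists_isPolygon_extremePoints hA hdim
  obtain ⟨k, v, hk, hinj, hrange, hnext⟩ := hpoly.exists_cyclic_order
  have hsegment (i : Fin k) := isEdgeOf_segment_of_isNext hA hpoly (hnext i)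
  refine ⟨k, v, hk, hinj, hrange, fun e ↦ ⟨fun he ↦ ?_, ?_⟩⟩
  · have segment_eq {i : Fin k} (hi : v i ∈ e) (hi' : v (nxt i) ∈ e) :
        ∃ j, segment ℝ (v j) (v (nxt j)) = e :=
      ⟨i, (hsegment i).1.eq_of_subset_of_setDim_le he.1 (he.1.convex.segment_subset hi hi')
        (by rw [he.2, (hsegment i).2])⟩
    obtain ⟨x, hx, hxe⟩ := hA.exists_extremePoint_mem he.1
    rw [← hrange] at hx
    obtain ⟨i, rfl⟩ := hx
    obtain ⟨j, rfl⟩ := nxt_surjective i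
    exact (mem_or_mem_of_isEdgeOf hA hdim hpoly he (hnext j) (hnext (nxt j)) hxe).elim
      (fun hj ↦ segment_eq hj hxe) (fun hj ↦ segment_eq hxe hj)
  · rintro ⟨i, rfl⟩
    exact hsegment i

namespace IsBoundaryCycle

variable {k : ℕ} {v : Fin k → E3}

lemma mem_extremePoints (h : IsBoundaryCycle A v) (i : Fin k) : v i ∈ A.extremePoints ℝ :=
  h.range_eq ▸ mem_range_self i

lemma mem (h : IsBoundaryCycle A v) (i : Fin k) : v i ∈ A :=
  extremePoints_subset (h.mem_extremePoints i)

lemma isEdgeOf_segment (h : IsBoundaryCycle A v) (i : Fin k) :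
    IsEdgeOf (segment ℝ (v i) (v (nxt i))) A :=
  (h.isEdgeOf_iff _).2 ⟨i, rfl⟩

lemma eq_or_eq_nxt_of_mem_segment (h : IsBoundaryCycle A v) {i j : Fin k}
    (hj : v j ∈ segment ℝ (v i) (v (nxt i))) : j = i ∨ j = nxt i :=
  ((mem_extremePoints_iff_forall_segment.1 (h.mem_extremePoints j)).2 _ (h.mem i) _ (h.mem _)
    hj).imp (fun hij ↦ (h.injective hij).symm) (fun hij ↦ (h.injective hij).symm)

lemma segment_injective (h : IsBoundaryCycle A v) :
    Function.Injective fun i ↦ segment ℝ (v i) (v (nxt i)) := by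
  intro i j (hij : segment ℝ (v i) (v (nxt i)) = segment ℝ (v j) (v (nxt j)))
  have hi := h.eq_or_eq_nxt_of_mem_segment (hij ▸ left_mem_segment ℝ (v i) (v (nxt i)))
  have hi' := h.eq_or_eq_nxt_of_mem_segment (hij ▸ right_mem_segment ℝ (v i) (v (nxt i)))
  refine hi.resolve_right fun hj ↦ ?_
  rcases hi' with hi' | hi'
  · exact nxt_nxt_ne_self h.three_le j (hj ▸ hi')
  · exact nxt_ne_self (by have := h.three_le; omega) j (hj ▸ nxt_injective hi')

lemma facetEdges_eq {P : Set E3} (h : IsBoundaryCycle A v) (hA : IsFaceOf A P) :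
    facetEdges P A = k := by
  have hrange : {e | IsEdgeOf e P ∧ e ⊆ A} = range fun i ↦ segment ℝ (v i) (v (nxt i)) := by
    ext e
    rw [mem_ofPred_eq, ← isEdgeOf_iff_of_isFaceOf hA, h.isEdgeOf_iff, mem_range]
  rw [facetEdges, hrange, ncard_range_of_injective h.segment_injective, Nat.card_fin]

end IsBoundaryCycle

end BoundaryCycle

section Facets

variable {P A B e : Set E3} {f u : E3 →ₗ[ℝ] ℝ} {c d : ℝ} {x : E3}

lemma vectorSpan_eq_top (hdim : setDim P = 3) : vectorSpan ℝ P = ⊤ :=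
  Submodule.eq_top_of_finrank_eq (hdim.trans finrank_euclideanSpace_fin.symm)

lemma eq_zero_of_forall_apply_eq (hdim : setDim P = 3) (hf : ∀ x ∈ P, f x = c) : f = 0 := by
  rw [← LinearMap.ker_eq_top, ← top_le_iff, ← vectorSpan_eq_top hdim, vectorSpan_def,
    Submodule.span_le]
  rintro _ ⟨x, hx, y, hy, rfl⟩
  simp [hf x hx, hf y hy]

lemma ne_of_isFacetOf (hdim : setDim P = 3) (hA : IsFacetOf A P) : A ≠ P := by
  rintro rfl
  exact absurd (hdim.symm.trans hA.2) (by decide)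

/-- Turning the hyperplane `f = c` about its contact with `u = d` on `A`, one stops at the first
vertex of `P` outside `A`. -/
lemma exists_tilt_of_isSupporting (hP : IsPolytope P) (hA : IsFaceOf A P) (hAP : A ≠ P)
    (hf : IsSupporting f c P A) (hu : ∀ x ∈ A, d ≤ u x) :
    ∃ t : ℝ, (∀ x ∈ P, d + t * c ≤ (u + t • f) x) ∧
      ∃ w ∈ P \ A, (u + t • f) w = d + t * c := by
  have hne : (P.extremePoints ℝ \ A).Nonempty := by
    rw [sdiff_nonempty]
    exact fun h ↦ hAP (hA.subset.antisymm (hP.subset_of_extremePoints_subset hA.convex h))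
  obtain ⟨t, ht, w, ⟨hw, hwA⟩, htw⟩ := exists_tilt hP.finite_extremePoints.sdiff hne
    (fun x ↦ u x - d) (fun x ↦ f x - c)
    fun x hx ↦ sub_pos.2 (hf.lt (extremePoints_subset hx.1) hx.2)
  have tilt_eq (x : E3) : (u + t • f) x = u x - d + t * (f x - c) + (d + t * c) := by
    simp only [LinearMap.add_apply, LinearMap.smul_apply, smul_eq_mul]
    ring
  have hconv : Convex ℝ {x | d + t * c ≤ (u + t • f) x} :=
    convex_halfSpace_ge (u + t • f).isLinear _
  suffices P.extremePoints ℝ ⊆ {x | d + t * c ≤ (u + t • f) x} from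
    ⟨t, hP.subset_of_extremePoints_subset hconv this, w, ⟨extremePoints_subset hw, hwA⟩,
      by rw [tilt_eq, htw, zero_add]⟩
  intro x hx
  rw [mem_ofPred_eq, tilt_eq, le_add_iff_nonneg_left]
  by_cases hxA : x ∈ A
  · rw [(hf.eq_iff x (extremePoints_subset hx)).2 hxA, sub_self, mul_zero, add_zero]
    exact sub_nonneg.2 (hu x hxA)
  · exact ht x ⟨hx, hxA⟩

lemma exists_isFacetOf_inter_eq (hP : IsPolytope P) (hdim : setDim P = 3) (hA : IsFacetOf A P)
    (he : IsEdgeOf e A) : ∃ B, IsFacetOf B P ∧ A ∩ B = e := by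
  obtain ⟨f, c, hf⟩ := hA.1.exists_isSupporting hP.convex (by rw [hdim, hA.2])
  obtain ⟨u, d, hu⟩ := he.1.exists_isSupporting hA.1.convex (by rw [hA.2, he.2])
  obtain ⟨t, hle, w, ⟨hwP, hwA⟩, hw⟩ :=
    exists_tilt_of_isSupporting hP hA.1 (ne_of_isFacetOf hdim hA) hf hu.le
  let B := {x ∈ P | (u + t • f) x = d + t * c}
  have hB : IsFaceOf B P :=
    hP.isFaceOf_of_isSupporting (isSupporting_sep hle) (sep_subset _ _) ⟨w, hwP, hw⟩
  have hAB : A ∩ B = e := by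
    ext x
    refine ⟨fun ⟨hxA, _, hx⟩ ↦ (hu.eq_iff x hxA).1 ?_, fun hx ↦ ?_⟩
    · simpa [(hf.eq_iff x (hA.1.subset hxA)).2 hxA] using hx
    · have hxA := he.1.subset hx
      have hxP := hA.1.subset hxA
      exact ⟨hxA, hxP, by simp [(hf.eq_iff x hxP).2 hxA, (hu.eq_iff x hxA).2 hx]⟩
  have heB : IsFaceOf e B := (he.1.trans hA.1).of_subset hB (hAB ▸ inter_subset_right)
  have hlower : setDim e < setDim B := heB.setDim_lt fun h ↦ hwA (he.1.subset (h ▸ ⟨hwP, hw⟩))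
  have hupper : setDim B < setDim P := hB.setDim_lt fun h ↦ by
    rw [h, inter_eq_left.2 hA.1.subset] at hAB
    have := hA.2
    rw [hAB, he.2] at this
    omega
  exact ⟨B, ⟨hB, by have := he.2; omega⟩, hAB⟩

lemma exists_isSupporting_ssuperset (hP : IsPolytope P) (hdim : setDim P = 3)
    (hA : IsFaceOf A P) (hAdim : setDim A < 2) (hf : IsSupporting f c P A) :
    ∃ B g d, IsFaceOf B P ∧ B ≠ P ∧ IsSupporting g d P B ∧ A ⊂ B := by
  obtain ⟨u, huA, huf⟩ : ∃ u ∈ (vectorSpan ℝ A).dualAnnihilator, u ∉ Submodule.span ℝ {f} := by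
    by_contra! h
    have hle : Module.finrank ℝ (vectorSpan ℝ A).dualAnnihilator ≤ 1 :=
      (Submodule.finrank_mono h).trans ((finrank_span_le_card {f}).trans (by simp))
    have hadd := Subspace.finrank_add_finrank_dualAnnihilator_eq (vectorSpan ℝ A)
    rw [finrank_euclideanSpace_fin] at hadd
    unfold setDim at hAdim
    omega
  obtain ⟨a, ha⟩ := hA.nonempty
  have hu : ∀ x ∈ A, u x = u a := fun x hx ↦ by
    rw [← sub_eq_zero, ← map_sub]
    exact (Submodule.mem_dualAnnihilator u).1 huA _ (vsub_mem_vectorSpan ℝ hx ha)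
  have hAP : A ≠ P := by
    rintro rfl
    omega
  obtain ⟨t, hle, w, ⟨hwP, hwA⟩, hw⟩ :=
    exists_tilt_of_isSupporting hP hA hAP hf fun x hx ↦ (hu x hx).ge
  refine ⟨{x ∈ P | (u + t • f) x = u a + t * c}, u + t • f, u a + t * c,
    hP.isFaceOf_of_isSupporting (isSupporting_sep hle) (sep_subset _ _) ⟨w, hwP, hw⟩,
    fun hBP ↦ huf ?_, isSupporting_sep hle, fun x hx ↦ ⟨hA.subset hx, ?_⟩,
    fun h ↦ hwA (h ⟨hwP, hw⟩)⟩
  · have hzero : u + t • f = 0 :=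
      eq_zero_of_forall_apply_eq hdim fun x hx ↦ (sep_eq_self_iff_mem_true.1 hBP x hx)
    exact Submodule.mem_span_singleton.2 ⟨-t, by rw [neg_smul, ← eq_neg_of_add_eq_zero_left hzero]⟩
  · simp [hu x hx, (hf.eq_iff x (hA.subset hx)).2 hx]

lemma exists_isFacetOf_superset {A : Set E3} {f : E3 →ₗ[ℝ] ℝ} {c : ℝ} (hP : IsPolytope P)
    (hdim : setDim P = 3) (hA : IsFaceOf A P) (hAP : A ≠ P) (hf : IsSupporting f c P A) :
    ∃ B, IsFacetOf B P ∧ A ⊆ B := by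
  have hupper : setDim A < 3 := hdim ▸ hA.setDim_lt hAP
  by_cases hAdim : setDim A = 2
  · exact ⟨A, ⟨hA, hAdim⟩, Subset.rfl⟩
  · obtain ⟨B, g, d, hB, hBP, hg, hAB⟩ :=
      exists_isSupporting_ssuperset hP hdim hA (by omega) hf
    have : setDim A < setDim B := (hA.of_subset hB hAB.subset).setDim_lt hAB.ne
    obtain ⟨C, hC, hBC⟩ := exists_isFacetOf_superset hP hdim hB hBP hg
    exact ⟨C, hC, hAB.subset.trans hBC⟩
termination_by 3 - setDim A

lemma exists_isFacetOf_mem_of_mem_frontier (hP : IsPolytope P) (hdim : setDim P = 3)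
    (hx : x ∈ frontier P) : ∃ A, IsFacetOf A P ∧ x ∈ A := by
  rw [hP.isCompact.isClosed.frontier_eq] at hx
  have hspan : affineSpan ℝ P = ⊤ :=
    (AffineSubspace.affineSpan_eq_top_iff_vectorSpan_eq_top_of_nonempty ℝ E3 E3 ⟨x, hx.1⟩).2
      (vectorSpan_eq_top hdim)
  obtain ⟨f, hf0, hf⟩ := geometric_hahn_banach_of_nonempty_interior_point hP.convex hx.2
    (hP.convex.interior_nonempty_iff_affineSpan_eq_top.2 hspan)
  have hsupp : IsSupporting (-f : E3 →ₗ[ℝ] ℝ) (-f x) P {y ∈ P | -f y = -f x} :=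
    isSupporting_sep fun y hy ↦ neg_le_neg (hf y hy)
  have hface := hP.isFaceOf_of_isSupporting hsupp (sep_subset _ _) ⟨x, hx.1, rfl⟩
  have hproper : {y ∈ P | -f y = -f x} ≠ P := fun h ↦ hf0 <| by
    have hzero := eq_zero_of_forall_apply_eq hdim fun y hy ↦
      neg_inj.1 (sep_eq_self_iff_mem_true.1 h y hy)
    exact ContinuousLinearMap.coe_injective hzero
  obtain ⟨A, hA, hsub⟩ := exists_isFacetOf_superset hP hdim hface hproper hsupp
  exact ⟨A, hA, hsub ⟨hx.1, rfl⟩⟩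

lemma subset_frontier_of_isFacetOf (hP : IsPolytope P) (hdim : setDim P = 3)
    (hA : IsFacetOf A P) : A ⊆ frontier P := by
  rw [hP.isCompact.isClosed.frontier_eq]
  have hdisj := hA.1.disjoint_intrinsicInterior (ne_of_isFacetOf hdim hA)
  exact fun x hx ↦ ⟨hA.1.subset hx, fun hint ↦
    disjoint_left.1 hdisj (interior_subset_intrinsicInterior hint) hx⟩

end Facets

section FacetRing

variable {P F A B C D : Set E3} {k : ℕ} {v : Fin k → E3} {L : Fin k → Set E3} {x : E3}

lemma eq_or_eq_or_eq_of_isFacetOf (hP : IsSimplePolytope3 P) (hx : x ∈ P.extremePoints ℝ)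
    (hA : IsFacetOf A P ∧ x ∈ A) (hB : IsFacetOf B P ∧ x ∈ B) (hC : IsFacetOf C P ∧ x ∈ C)
    (hAB : A ≠ B) (hAC : A ≠ C) (hBC : B ≠ C) (hD : IsFacetOf D P ∧ x ∈ D) :
    D = A ∨ D = B ∨ D = C := by
  have hcard := hP.2.2 x (isVertexOf_iff.2 hx)
  have heq : {A, B, C} = {G | IsFacetOf G P ∧ x ∈ G} := by
    refine eq_of_subset_of_ncard_le ?_ ?_ (finite_of_ncard_pos (by omega))
    · rintro _ (rfl | rfl | rfl) <;> assumption
    · rw [hcard, ncard_eq_three.2 ⟨A, B, C, hAB, hAC, hBC, rfl⟩]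
  exact (heq.symm ▸ hD : D ∈ ({A, B, C} : Set (Set E3)))

lemma ncard_facets_of_simplex {ι : Type*} [Fintype ι] (hι : Fintype.card ι = 4)
    (hP : IsPolytope P) (hdim : setDim P = 3) {G : ι → Set E3} (hG : ∀ i, IsFacetOf (G i) P)
    {p : ι → E3} (hon : ∀ i j, i ≠ j → p j ∈ G i) (hoff : ∀ i, p i ∉ G i) :
    (facets P).ncard = 4 := by
  have : Nontrivial ι := Fintype.one_lt_card_iff_nontrivial.1 (by omega)
  have hpP (i : ι) : p i ∈ P := by
    obtain ⟨j, hji⟩ := exists_ne i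
    exact (hG j).1.subset (hon j i hji)
  choose f c hf using fun i ↦
    (hG i).1.exists_isSupporting hP.convex (by rw [hdim, (hG i).2])
  have hP_subset : P ⊆ convexHull ℝ (range p) := fun x hx ↦
    mem_convexHull_range_of_simplex (by rw [hι, finrank_euclideanSpace_fin])
      (fun i j hij ↦ ((hf i).eq_iff _ (hpP j)).2 (hon i j hij))
      (fun i ↦ (hf i).lt (hpP i) (hoff i)) (fun i ↦ (hf i).le x hx)
  have hP_eq : convexHull ℝ (range p) = P :=
    (convexHull_min (range_subset_iff.2 hpP) hP.convex).antisymm hP_subset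
  have hfacets : facets P = range G := by
    refine Subset.antisymm (fun A (hA : IsFacetOf A P) ↦ ?_) (range_subset_iff.2 hG)
    obtain ⟨i, hi⟩ : ∃ i, p i ∉ A := by
      by_contra! h
      have hAP := hP_subset.trans (convexHull_min (range_subset_iff.2 h) hA.1.convex)
      have := setDim_mono hAP
      have := hA.2
      omega
    refine ⟨i, (hA.1.eq_of_subset_of_setDim_le (hG i).1 ?_ (by rw [hA.2, (hG i).2])).symm⟩
    refine (hP.isPolytope_of_isFaceOf hA.1).subset_of_extremePoints_subset (hG i).1.convex
      fun x hx ↦ ?_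
    have hxp : x ∈ range p := extremePoints_convexHull_subset
      (hP_eq.symm ▸ hA.1.isExtreme.extremePoints_subset_extremePoints hx)
    obtain ⟨j, rfl⟩ := hxp
    exact hon i j fun hij ↦ hi (hij ▸ extremePoints_subset hx)
  have hG_injective : Function.Injective G := fun i j hij ↦ by
    by_contra hne
    exact hoff j (hij ▸ hon i j hne)
  rw [hfacets, ncard_range_of_injective hG_injective, Nat.card_eq_fintype_card, hι]

/-- `L` lists the facets adjacent to the facet `F` of `P`, following the boundary cycle `v` of
`F`. -/
structure IsFacetRing (P F : Set E3) {k : ℕ} (v : Fin k → E3) (L : Fin k → Set E3) : Prop where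
  isFacetOf_center : IsFacetOf F P
  isBoundaryCycle : IsBoundaryCycle F v
  isFacetOf : ∀ i, IsFacetOf (L i) P
  inter_eq : ∀ i, F ∩ L i = segment ℝ (v i) (v (nxt i))

lemma exists_isFacetRing (hP : IsPolytope P) (hdim : setDim P = 3) (hF : IsFacetOf F P) :
    ∃ (k : ℕ) (v : Fin k → E3) (L : Fin k → Set E3), IsFacetRing P F v L := by
  obtain ⟨k, v, hv⟩ := exists_isBoundaryCycle (hP.isPolytope_of_isFaceOf hF.1) hF.2
  choose L hL hFL using fun i ↦ exists_isFacetOf_inter_eq hP hdim hF (hv.isEdgeOf_segment i)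
  exact ⟨k, v, L, hF, hv, hL, hFL⟩

namespace IsFacetRing

lemma mem_extremePoints (h : IsFacetRing P F v L) (i : Fin k) : v i ∈ P.extremePoints ℝ :=
  h.isFacetOf_center.1.isExtreme.extremePoints_subset_extremePoints
    (h.isBoundaryCycle.mem_extremePoints i)

lemma isEdgeOf_inter (h : IsFacetRing P F v L) (i : Fin k) : IsEdgeOf (F ∩ L i) P := by
  rw [h.inter_eq]
  exact ((isEdgeOf_iff_of_isFaceOf h.isFacetOf_center.1).1
    (h.isBoundaryCycle.isEdgeOf_segment i)).1

lemma center_ne (h : IsFacetRing P F v L) (i : Fin k) : F ≠ L i := by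
  intro hFL
  have hedge := (h.isEdgeOf_inter i).2
  rw [← hFL, inter_self, h.isFacetOf_center.2] at hedge
  omega

lemma injective (h : IsFacetRing P F v L) : Function.Injective L := fun i j hij ↦
  h.isBoundaryCycle.segment_injective <| by simp only [← h.inter_eq, hij]

lemma mem_iff (h : IsFacetRing P F v L) {i j : Fin k} : v j ∈ L i ↔ j = i ∨ j = nxt i := by
  have hmem : v j ∈ L i ↔ v j ∈ segment ℝ (v i) (v (nxt i)) := by
    rw [← h.inter_eq, mem_inter_iff, and_iff_right (h.isBoundaryCycle.mem j)]
  rw [hmem]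
  refine ⟨h.isBoundaryCycle.eq_or_eq_nxt_of_mem_segment, ?_⟩
  rintro (rfl | rfl)
  exacts [left_mem_segment ℝ _ _, right_mem_segment ℝ _ _]

lemma exists_vertex_mem (h : IsFacetRing P F v L) (hP : IsPolytope P) (hA : IsFaceOf A P)
    (hne : (F ∩ A).Nonempty) : ∃ i, v i ∈ A := by
  obtain ⟨x, hx, hxF, hxA⟩ := hP.exists_extremePoint_mem (h.isFacetOf_center.1.inter hA hne)
  have hxv : x ∈ range v := by
    rw [h.isBoundaryCycle.range_eq, h.isFacetOf_center.1.isExtreme.extremePoints_eq]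
    exact ⟨hxF, hx⟩
  obtain ⟨i, rfl⟩ := hxv
  exact ⟨i, hxA⟩

lemma nxt_mem_inter (h : IsFacetRing P F v L) (i : Fin k) : v (nxt i) ∈ L i ∩ L (nxt i) :=
  ⟨h.mem_iff.2 (.inr rfl), h.mem_iff.2 (.inl rfl)⟩

lemma ne_nxt (h : IsFacetRing P F v L) (i : Fin k) : L i ≠ L (nxt i) :=
  h.injective.ne (nxt_ne_self (by have := h.isBoundaryCycle.three_le; omega) i).symm

lemma exists_eq_of_inter_nonempty (h : IsFacetRing P F v L) (hP : IsSimplePolytope3 P)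
    (hA : IsFacetOf A P) (hFA : F ≠ A) (hne : (F ∩ A).Nonempty) : ∃ i, L i = A := by
  obtain ⟨j, hj⟩ := h.exists_vertex_mem hP.1 hA.1 hne
  obtain ⟨i, rfl⟩ := nxt_surjective j
  rcases eq_or_eq_or_eq_of_isFacetOf hP (h.mem_extremePoints _)
    ⟨h.isFacetOf_center, h.isBoundaryCycle.mem _⟩ ⟨h.isFacetOf i, (h.nxt_mem_inter i).1⟩
    ⟨h.isFacetOf _, (h.nxt_mem_inter i).2⟩ (h.center_ne _) (h.center_ne _) (h.ne_nxt i)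
    ⟨hA, hj⟩ with hAF | hAi | hAi
  exacts [(hFA hAF.symm).elim, ⟨i, hAi.symm⟩, ⟨nxt i, hAi.symm⟩]

end IsFacetRing

lemma isEdgeOf_inter_of_nonempty (hP : IsSimplePolytope3 P) (hA : IsFacetOf A P)
    (hB : IsFacetOf B P) (hAB : A ≠ B) (hne : (A ∩ B).Nonempty) : IsEdgeOf (A ∩ B) P := by
  obtain ⟨k, v, L, hL⟩ := exists_isFacetRing hP.1 hP.2.1 hA
  obtain ⟨i, rfl⟩ := hL.exists_eq_of_inter_nonempty hP hB hAB hne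
  exact hL.isEdgeOf_inter i

lemma isBelt_three (hA : IsFacetOf A P) (hB : IsFacetOf B P) (hC : IsFacetOf C P)
    (hAB : IsEdgeOf (A ∩ B) P) (hBC : IsEdgeOf (B ∩ C) P) (hCA : IsEdgeOf (C ∩ A) P)
    (hempty : A ∩ B ∩ C = ∅) : IsBelt P ![A, B, C] := by
  refine ⟨le_rfl, ⟨by omega, ?_, fun _ ↦ ?_⟩, fun _ ↦ ?_, by omega⟩ <;>
    simp only [Fin.forall_fin_succ, IsEmpty.forall_iff, and_true]
  · exact ⟨hA, hB, hC⟩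
  · exact ⟨hAB, hBC, hCA⟩
  · refine ⟨hempty, ?_, ?_⟩
    · rw [← hempty, inter_assoc A, inter_comm A]
      rfl
    · rw [← hempty, inter_comm (A ∩ B), ← inter_assoc]
      rfl

namespace IsFacetRing

lemma isEdgeOf_inter_nxt (h : IsFacetRing P F v L) (hP : IsSimplePolytope3 P) (i : Fin k) :
    IsEdgeOf (L i ∩ L (nxt i)) P :=
  isEdgeOf_inter_of_nonempty hP (h.isFacetOf i) (h.isFacetOf _) (h.ne_nxt i)
    ⟨_, h.nxt_mem_inter i⟩

lemma isLoop (h : IsFacetRing P F v L) (hP : IsSimplePolytope3 P) : IsLoop P L :=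
  ⟨by have := h.isBoundaryCycle.three_le; omega, h.isFacetOf,
    fun _ ↦ h.isEdgeOf_inter_nxt hP⟩

lemma inter_inter_eq_empty {v : Fin 3 → E3} {L : Fin 3 → Set E3} (h : IsFacetRing P F v L)
    (hP : IsSimplePolytope3 P) (hcard : (facets P).ncard ≠ 4) (i : Fin 3) :
    L i ∩ L (nxt i) ∩ L (nxt (nxt i)) = ∅ := by
  by_contra hne
  rw [← ne_eq, ← nonempty_iff_ne_empty] at hne
  have hface := ((h.isFacetOf i).1.inter (h.isFacetOf (nxt i)).1 (hne.mono inter_subset_left)).inter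
    (h.isFacetOf (nxt (nxt i))).1 hne
  obtain ⟨x, hx, ⟨hx₀, hx₁⟩, hx₂⟩ := hP.1.exists_extremePoint_mem hface
  have hxL (j : Fin 3) : x ∈ L j := by
    have hij : ∀ i j : Fin 3, j = i ∨ j = nxt i ∨ j = nxt (nxt i) := by decide
    rcases hij i j with rfl | rfl | rfl <;> assumption
  have hxF : x ∉ F := fun hxF ↦ by
    rcases eq_or_eq_or_eq_of_isFacetOf hP hx ⟨h.isFacetOf 0, hxL 0⟩ ⟨h.isFacetOf 1, hxL 1⟩
      ⟨h.isFacetOf 2, hxL 2⟩ (h.injective.ne (by decide)) (h.injective.ne (by decide))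
      (h.injective.ne (by decide)) ⟨h.isFacetOf_center, hxF⟩ with hF | hF | hF <;>
    exact h.center_ne _ hF
  let G : Option (Fin 3) → Set E3 := fun o ↦ o.elim F L
  let p : Option (Fin 3) → E3 := fun o ↦ o.elim x fun j ↦ v (nxt (nxt j))
  refine hcard (ncard_facets_of_simplex (G := G) (p := p) rfl hP.1 hP.2.1 ?_ ?_ ?_)
  · rintro (_ | j)
    exacts [h.isFacetOf_center, h.isFacetOf j]
  · rintro (_ | i) (_ | j) hij
    · exact (hij rfl).elim
    · exact h.isBoundaryCycle.mem _
    · exact hxL i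
    · have : ∀ i j : Fin 3, i ≠ j → nxt (nxt j) = i ∨ nxt (nxt j) = nxt i := by decide
      exact h.mem_iff.2 (this i j (by simpa using hij))
  · rintro (_ | i) hi
    · exact hxF hi
    · have : ∀ i : Fin 3, ¬ (nxt (nxt i) = i ∨ nxt (nxt i) = nxt i) := by decide
      exact this i (h.mem_iff.1 hi)

lemma inter_nonempty_iff (h : IsFacetRing P F v L) (hP : IsSimplePolytope3 P)
    (hbelt : ∀ B : Fin 3 → Set E3, ¬ IsBelt P B) {p q : Fin k} (hpq : p ≠ q) :
    (L p ∩ L q).Nonempty ↔ q = nxt p ∨ p = nxt q := by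
  constructor
  · intro hne
    by_contra! hnxt
    have hempty : F ∩ L p ∩ L q = ∅ := by
      rw [← not_nonempty_iff_eq_empty, inter_assoc]
      intro hmeet
      obtain ⟨i, hip, hiq⟩ :=
        h.exists_vertex_mem hP.1 ((h.isFacetOf p).1.inter (h.isFacetOf q).1 hne) hmeet
      rcases h.mem_iff.1 hip with rfl | rfl <;> rcases h.mem_iff.1 hiq with hi | hi
      exacts [hpq hi, hnxt.2 hi, hnxt.1 hi.symm, hpq (nxt_injective hi)]
    exact hbelt _ (isBelt_three h.isFacetOf_center (h.isFacetOf p) (h.isFacetOf q)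
      (h.isEdgeOf_inter p)
      (isEdgeOf_inter_of_nonempty hP (h.isFacetOf p) (h.isFacetOf q) (h.injective.ne hpq) hne)
      (inter_comm F _ ▸ h.isEdgeOf_inter q) hempty)
  · rintro (rfl | rfl)
    · exact ⟨_, h.nxt_mem_inter p⟩
    · exact ⟨_, (h.nxt_mem_inter q).symm⟩

lemma isBelt (h : IsFacetRing P F v L) (hP : IsFlag3Polytope P) : IsBelt P L := by
  obtain ⟨hsimple, hcard, hbelt⟩ := hP
  refine ⟨h.isBoundaryCycle.three_le, h.isLoop hsimple, ?_,
    fun _ p q ↦ h.inter_nonempty_iff hsimple hbelt⟩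
  rintro rfl
  exact h.inter_inter_eq_empty hsimple hcard

end IsFacetRing

end FacetRing

section Surrounds

variable {P F A C : Set E3} {k : ℕ} {v : Fin k → E3} {L : Fin k → Set E3}

/-- The closed polygonal path through `v 0, …, v (k - 1)`, which for a boundary cycle of a facet is
its relative boundary. -/
def edgeCycle {k : ℕ} (v : Fin k → E3) : Set E3 := ⋃ i, segment ℝ (v i) (v (nxt i))

namespace IsFacetRing

lemma edgeCycle_subset (h : IsFacetRing P F v L) : edgeCycle v ⊆ F :=
  iUnion_subset fun i ↦ (h.inter_eq i).symm.subset.trans inter_subset_left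

lemma isSimpleEdgeCycleVia (h : IsFacetRing P F v L) : IsSimpleEdgeCycleVia P (edgeCycle v) v :=
  ⟨h.isBoundaryCycle.three_le, h.isBoundaryCycle.injective,
    fun i ↦ isVertexOf_iff.2 (h.mem_extremePoints i),
    fun i ↦ h.inter_eq i ▸ h.isEdgeOf_inter i, rfl⟩

lemma inter_subset_edgeCycle (h : IsFacetRing P F v L) (hP : IsSimplePolytope3 P)
    (hA : IsFacetOf A P) (hFA : F ≠ A) : F ∩ A ⊆ edgeCycle v := by
  rcases (F ∩ A).eq_empty_or_nonempty with hempty | hne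
  · exact hempty ▸ empty_subset _
  · obtain ⟨i, rfl⟩ := h.exists_eq_of_inter_nonempty hP hA hFA hne
    exact h.inter_eq i ▸ subset_iUnion (fun i ↦ segment ℝ (v i) (v (nxt i))) i

lemma nonempty_index (h : IsFacetRing P F v L) : Nonempty (Fin k) :=
  Fin.pos_iff_nonempty.1 (by have := h.isBoundaryCycle.three_le; omega)

lemma isPreconnected_center_sdiff (h : IsFacetRing P F v L) :
    IsPreconnected (F \ edgeCycle v) := by
  have := h.nonempty_index
  rw [edgeCycle, sdiff_iUnion]
  exact (convex_iInter fun i ↦ (h.isBoundaryCycle.isEdgeOf_segment i).1.isExtreme.convex_sdiff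
    h.isFacetOf_center.1.convex).isPreconnected

lemma intrinsicInterior_center_subset (h : IsFacetRing P F v L) :
    intrinsicInterior ℝ F ⊆ F \ edgeCycle v := by
  refine subset_sdiff.2 ⟨intrinsicInterior_subset, disjoint_iUnion_right.2 fun i ↦ ?_⟩
  obtain ⟨hedge, hdim⟩ := h.isBoundaryCycle.isEdgeOf_segment i
  refine hedge.disjoint_intrinsicInterior fun heq ↦ ?_
  exact absurd (hdim.symm.trans (heq ▸ h.isFacetOf_center.2)) (by decide)

lemma center_sdiff_nonempty (h : IsFacetRing P F v L) : (F \ edgeCycle v).Nonempty :=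
  (h.isFacetOf_center.1.nonempty.intrinsicInterior h.isFacetOf_center.1.convex).mono
    h.intrinsicInterior_center_subset

lemma exists_isCompOf_center_sdiff_subset (h : IsFacetRing P F v L) (hP : IsSimplePolytope3 P) :
    ∃ C, IsCompOf C (frontier P \ edgeCycle v) ∧ F \ edgeCycle v ⊆ C := by
  have hfrontier := subset_frontier_of_isFacetOf hP.1 hP.2.1 h.isFacetOf_center
  have hF_subset : F \ edgeCycle v ⊆ frontier P \ edgeCycle v := sdiff_subset_sdiff_left hfrontier
  obtain ⟨x, hx⟩ := h.center_sdiff_nonempty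
  exact ⟨_, ⟨x, hF_subset hx, rfl⟩,
    h.isPreconnected_center_sdiff.subset_connectedComponentIn hx hF_subset⟩

lemma isPreconnected_sdiff_center (h : IsFacetRing P F v L) (i : Fin k) :
    IsPreconnected (L i \ F) := by
  have hextreme : IsExtreme ℝ (L i) (F ∩ L i) :=
    (h.isEdgeOf_inter i).1.isExtreme.mono (h.isFacetOf i).1.subset inter_subset_right
  rw [← sdiff_inter_self_eq_sdiff]
  exact (hextreme.convex_sdiff (h.isFacetOf i).1.convex).isPreconnected

lemma intrinsicInterior_subset_sdiff_center (h : IsFacetRing P F v L) (i : Fin k) :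
    intrinsicInterior ℝ (L i) ⊆ L i \ F := by
  have hface := (h.isEdgeOf_inter i).1.of_subset (h.isFacetOf i).1 inter_subset_right
  rw [← sdiff_inter_self_eq_sdiff]
  refine subset_sdiff.2 ⟨intrinsicInterior_subset, hface.disjoint_intrinsicInterior fun heq ↦ ?_⟩
  exact absurd ((h.isEdgeOf_inter i).2.symm.trans (heq ▸ (h.isFacetOf i).2)) (by decide)

lemma inter_nxt_sdiff_center_nonempty (h : IsFacetRing P F v L) (hP : IsSimplePolytope3 P)
    (i : Fin k) : ((L i ∩ L (nxt i)) \ F).Nonempty := by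
  rw [sdiff_nonempty]
  intro hsub
  have hedge := h.isEdgeOf_inter_nxt hP i
  have eq_inter (j : Fin k) (hj : L i ∩ L (nxt i) ⊆ L j) : L i ∩ L (nxt i) = F ∩ L j :=
    hedge.1.eq_of_subset_of_setDim_le (h.isEdgeOf_inter j).1 (subset_inter hsub hj)
      (by rw [hedge.2, (h.isEdgeOf_inter j).2])
  have hinter := (eq_inter i inter_subset_left).symm.trans (eq_inter (nxt i) inter_subset_right)
  rw [h.inter_eq, h.inter_eq] at hinter
  exact h.ne_nxt i (congrArg L (h.isBoundaryCycle.segment_injective hinter))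

lemma sdiff_center_subset (h : IsFacetRing P F v L) (hP : IsSimplePolytope3 P) (i : Fin k) :
    L i \ F ⊆ frontier P \ edgeCycle v :=
  sdiff_subset_sdiff (subset_frontier_of_isFacetOf hP.1 hP.2.1 (h.isFacetOf i)) h.edgeCycle_subset

lemma exists_isCompOf_sdiff_center_subset (h : IsFacetRing P F v L) (hP : IsSimplePolytope3 P) :
    ∃ C, IsCompOf C (frontier P \ edgeCycle v) ∧ ∀ i, L i \ F ⊆ C := by
  obtain ⟨i₀⟩ := h.nonempty_index
  obtain ⟨y, ⟨hy, -⟩, hyF⟩ := h.inter_nxt_sdiff_center_nonempty hP i₀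
  refine ⟨_, ⟨y, h.sdiff_center_subset hP i₀ ⟨hy, hyF⟩, rfl⟩, nxt_induction i₀ ?_ fun i hi ↦ ?_⟩
  · exact (h.isPreconnected_sdiff_center i₀).subset_connectedComponentIn ⟨hy, hyF⟩
      (h.sdiff_center_subset hP i₀)
  · obtain ⟨z, ⟨hz, hz_nxt⟩, hzF⟩ := h.inter_nxt_sdiff_center_nonempty hP i
    rw [connectedComponentIn_eq (hi ⟨hz, hzF⟩)]
    exact (h.isPreconnected_sdiff_center _).subset_connectedComponentIn ⟨hz_nxt, hzF⟩
      (h.sdiff_center_subset hP _)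

lemma subset_center_or_disjoint_center (h : IsFacetRing P F v L) (hP : IsSimplePolytope3 P)
    (hC : IsPreconnected C) (hC_subset : C ⊆ frontier P \ edgeCycle v) :
    C ⊆ F ∨ Disjoint C F := by
  -- The facets other than `F` form a second closed set, which meets `F` inside `edgeCycle v`.
  let others := ⋃ A ∈ {A | IsFacetOf A P ∧ F ≠ A}, A
  have hothers : IsClosed others :=
    (hP.1.finite_setOf_isFaceOf.subset fun _ hA ↦ hA.1.1).isClosed_biUnion
      fun _ hA ↦ hA.1.1.isClosed
  have hcover : C ⊆ F ∪ others := fun x hx ↦ by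
    obtain ⟨A, hA, hxA⟩ := exists_isFacetOf_mem_of_mem_frontier hP.1 hP.2.1 (hC_subset hx).1
    rcases eq_or_ne F A with rfl | hFA
    exacts [.inl hxA, .inr (mem_biUnion ⟨hA, hFA⟩ hxA)]
  have hmeet : C ∩ (F ∩ others) = ∅ := by
    refine eq_empty_of_forall_notMem fun x ⟨hxC, hxF, hx⟩ ↦ ?_
    obtain ⟨A, ⟨hA, hFA⟩, hxA⟩ := mem_iUnion₂.1 hx
    exact (hC_subset hxC).2 (h.inter_subset_edgeCycle hP hA hFA ⟨hxF, hxA⟩)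
  refine (isPreconnected_iff_subset_of_disjoint_closed.1 hC F others
    h.isFacetOf_center.1.isClosed hothers hcover hmeet).imp_right fun hC_others ↦ ?_
  exact disjoint_left.2 fun x hxC hxF ↦ notMem_empty x (hmeet ▸ ⟨hxC, hxF, hC_others hxC⟩)

lemma walksRound (h : IsFacetRing P F v L) (hP : IsSimplePolytope3 P)
    (hC : ∀ i, L i \ F ⊆ C) : WalksRound P (edgeCycle v) C L := by
  refine ⟨h.isLoop hP, fun i ↦ (h.intrinsicInterior_subset_sdiff_center i).trans (hC i), k, v, id,
    h.isSimpleEdgeCycleVia, fun i ↦ h.inter_eq i ▸ inter_subset_right, fun _ ↦ .inr rfl,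
    Function.surjective_id, fun hk ↦ ?_⟩
  simp only [id, nxt_ne_self hk, ne_eq, not_false_eq_true, Finset.filter_true, Finset.card_univ,
    Fintype.card_fin]

lemma walksRound_center (h : IsFacetRing P F v L) (hC : F \ edgeCycle v ⊆ C) :
    WalksRound P (edgeCycle v) C fun _ : Fin 1 ↦ F := by
  have := h.nonempty_index
  exact ⟨⟨one_pos, fun _ ↦ h.isFacetOf_center, by omega⟩,
    fun _ ↦ h.intrinsicInterior_center_subset.trans hC, k, v, fun _ ↦ 0,
    h.isSimpleEdgeCycleVia, fun i ↦ h.inter_eq i ▸ inter_subset_left, fun _ ↦ .inl rfl,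
    Function.surjective_to_subsingleton _, by omega⟩

lemma surrounds (h : IsFacetRing P F v L) (hP : IsSimplePolytope3 P) : Surrounds P L F := by
  obtain ⟨C₁, hC₁, hLC₁⟩ := h.exists_isCompOf_sdiff_center_subset hP
  obtain ⟨C₂, hC₂, hFC₂⟩ := h.exists_isCompOf_center_sdiff_subset hP
  refine ⟨h.isFacetOf_center, edgeCycle v, C₁, C₂, hC₁, hC₂, ?_, h.walksRound hP hLC₁,
    h.walksRound_center hFC₂⟩
  rintro rfl
  obtain ⟨i⟩ := h.nonempty_index
  obtain ⟨x, hx⟩ := h.center_sdiff_nonempty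
  obtain ⟨y, ⟨hy, -⟩, hyF⟩ := h.inter_nxt_sdiff_center_nonempty hP i
  obtain ⟨z, -, rfl⟩ := hC₁
  rcases h.subset_center_or_disjoint_center hP isPreconnected_connectedComponentIn
    (connectedComponentIn_subset _ z) with hsub | hdisj
  · exact hyF (hsub (hLC₁ i ⟨hy, hyF⟩))
  · exact disjoint_left.1 hdisj (hFC₂ hx) hx.1

end IsFacetRing

end Surrounds

/-- In a flag 3-polytope, any `k`-gonal facet (`k ≥ 3`) is surrounded by a `k`-belt. -/
theorem facet_surrounded_by_belt (P F : Set E3) (hP : IsFlag3Polytope P)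
    {k : ℕ} (hk : 3 ≤ k) (hF : IsFacetOf F P) (hkF : facetEdges P F = k) :
    ∃ B : Fin k → Set E3, IsBelt P B ∧ Surrounds P B F := by
  obtain ⟨n, v, L, hL⟩ := exists_isFacetRing hP.1.1 hP.1.2.1 hF
  obtain rfl : n = k := (hL.isBoundaryCycle.facetEdges_eq hF.1).symm.trans hkF
  exact ⟨L, hL.isBelt hP, hL.surrounds hP.1⟩
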